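/- arXiv:2201.00496 — 3 statements merged into one kernel-verified Lean document; each statement's English description precedes it below -/
import Mathlib

section
/- Let D be a non-dictatorial, tops-only, unidimensional domain and fix n ≥ 2. There exists an anonymous and strategy-proof rule f : D^n → A if and only if D is a single-peaked domain on the line L^A, i.e., D ⊆ D_SP(L^A) and G_∼ is connected. -/
open Classical

set_option linter.unusedSectionVars false
set_option linter.unusedVariables false

/-- A strict preference over `A`, represented as a ranking bijection:
`P k` is the `(k+1)`-th ranked alternative. -/
abbrev Pref (A : Type*) [Fintype A] := Fin (Fintype.card A) ≃ A

variable {A : Type*} [Fintype A] [DecidableEq A] [Nonempty A]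

/-- `rk P k` : the `(k+1)`-th ranked alternative of `P` (0-indexed, so `rk P 0 = r₁(P)`). -/
noncomputable def rk (P : Pref A) (k : ℕ) : A :=
  if h : k < Fintype.card A then P ⟨k, h⟩ else Classical.arbitrary A

/-- The peak `r₁(P)`. -/
noncomputable def peak (P : Pref A) : A := rk P 0

/-- The second-ranked alternative `r₂(P)`. -/
noncomputable def second (P : Pref A) : A := rk P 1

/-- `a` is strictly preferred to `b` under `P`. -/
def prefers (P : Pref A) (a b : A) : Prop := P.symm a < P.symm b

/-- Two preferences are completely reversed. -/
def Reversed (P P' : Pref A) : Prop := ∀ a b : A, prefers P a b ↔ prefers P' b a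

/-- A profile lies in the domain `D`. -/
def InDom (D : Set (Pref A)) {n : ℕ} (P : Fin n → Pref A) : Prop := ∀ i, P i ∈ D

/-- Unanimity (an SCF satisfying it is called a rule). -/
def IsRule (D : Set (Pref A)) {n : ℕ} (f : (Fin n → Pref A) → A) : Prop :=
  ∀ P : Fin n → Pref A, InDom D P → ∀ a : A, (∀ i, peak (P i) = a) → f P = a

/-- Strategy-proofness (relative to the domain `D`). -/
def StrategyProof (D : Set (Pref A)) {n : ℕ} (f : (Fin n → Pref A) → A) : Prop :=
  ∀ P : Fin n → Pref A, InDom D P → ∀ i : Fin n, ∀ Q ∈ D,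
    f P = f (Function.update P i Q) ∨ prefers (P i) (f P) (f (Function.update P i Q))

/-- The tops-only property. -/
def TopsOnly (D : Set (Pref A)) {n : ℕ} (f : (Fin n → Pref A) → A) : Prop :=
  ∀ P P' : Fin n → Pref A, InDom D P → InDom D P' →
    (∀ i, peak (P i) = peak (P' i)) → f P = f P'

/-- Anonymity. -/
def Anonymous (D : Set (Pref A)) {n : ℕ} (f : (Fin n → Pref A) → A) : Prop :=
  ∀ P : Fin n → Pref A, InDom D P → ∀ σ : Equiv.Perm (Fin n), f (P ∘ σ) = f P

/-- `f` behaves like a dictatorship on `B`. -/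
def DictatorOn (D : Set (Pref A)) {n : ℕ} (f : (Fin n → Pref A) → A) (B : Set A) : Prop :=
  ∃ i : Fin n, ∀ P : Fin n → Pref A, InDom D P → (∀ j, peak (P j) ∈ B) → f P = peak (P i)

/-- `f` is a dictatorship. -/
def Dictatorship (D : Set (Pref A)) {n : ℕ} (f : (Fin n → Pref A) → A) : Prop :=
  DictatorOn D f Set.univ

/-- A dictatorial domain. -/
def DictatorialDomain (D : Set (Pref A)) : Prop :=
  ∀ n : ℕ, 2 ≤ n → ∀ f : (Fin n → Pref A) → A,
    IsRule D f → StrategyProof D f → Dictatorship D f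

/-- A tops-only domain. -/
def TopsOnlyDomain (D : Set (Pref A)) : Prop :=
  ∀ n : ℕ, 2 ≤ n → ∀ f : (Fin n → Pref A) → A,
    IsRule D f → StrategyProof D f → TopsOnly D f

/-- Adjacency of two alternatives relative to the domain `D`. -/
def DomAdjacent (D : Set (Pref A)) (a b : A) : Prop :=
  ∃ P ∈ D, ∃ P' ∈ D, peak P = a ∧ second P = b ∧ peak P' = b ∧ second P' = a ∧
    ∀ k : ℕ, 2 ≤ k → rk P k = rk P' k

/-- The adjacency graph `G_∼` of the domain `D`. -/
noncomputable def adjGraph (D : Set (Pref A)) : SimpleGraph A :=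
  SimpleGraph.fromRel (DomAdjacent D)

/-- Path-connectedness of the domain. -/
def PathConnectedDom (D : Set (Pref A)) : Prop := (adjGraph D).Connected

/-- Diversity: the domain contains two completely reversed preferences. -/
def Diversity (D : Set (Pref A)) : Prop := ∃ P ∈ D, ∃ P' ∈ D, Reversed P P'

/-- `S(D^a)`: the set of alternatives second-ranked in some preference of `D` with peak `a`. -/
def secondsSet (D : Set (Pref A)) (a : A) : Set A := {b | ∃ P ∈ D, peak P = a ∧ second P = b}

/-- Leaf symmetry. -/
def LeafSymmetry (D : Set (Pref A)) : Prop :=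
  ∀ x : A, (∃! y, (adjGraph D).Adj x y) →
    (∃ u ∈ secondsSet D x, ∃ v ∈ secondsSet D x, u ≠ v) →
    ∃ z ∈ secondsSet D x, ¬ (adjGraph D).Adj x z ∧ x ∈ secondsSet D z

/-- Unidimensionality: path-connectedness, diversity and leaf symmetry. -/
def Unidimensional (D : Set (Pref A)) : Prop :=
  PathConnectedDom D ∧ Diversity D ∧ LeafSymmetry D

/-- The unique seconds property. -/
def UniqueSeconds (D : Set (Pref A)) : Prop := ∃ x b : A, secondsSet D x = {b}

/-- Minimal richness. -/
def MinimallyRich (D : Set (Pref A)) : Prop := ∀ a : A, ∃ P ∈ D, peak P = a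

/-- The vertex set `⟨x, y|T⟩` of the (in a tree, unique) shortest path between `x` and `y`. -/
def intv (T : SimpleGraph A) (x y : A) : Set A :=
  {z | T.dist x z + T.dist z y = T.dist x y}

/-- `a'` is the projection of `a` onto `B` in `T`. -/
def IsProjPt (T : SimpleGraph A) (B : Set A) (a a' : A) : Prop :=
  a' ∈ B ∧ ∀ b ∈ B, a' ∈ intv T a b

/-- The projection `Proj(a, B)` of `a` onto a path-closed set `B` in the tree `T`. -/
noncomputable def projOn (T : SimpleGraph A) (B : Set A) (a : A) : A :=
  if h : ∃ a', IsProjPt T B a a' then h.choose else a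

/-- `Γ(P)`: the vertex set of the minimal subtree of `T` spanning all the peaks. -/
def gammaSet (T : SimpleGraph A) {n : ℕ} (P : Fin n → Pref A) : Set A :=
  {c | ∃ i j : Fin n, c ∈ intv T (peak (P i)) (peak (P j))}

/-- The projection rule on `T` w.r.t. `xbar`. -/
noncomputable def projRule (T : SimpleGraph A) (xbar : A) {n : ℕ}
    (P : Fin n → Pref A) : A :=
  projOn T (gammaSet T P) xbar

/-- Single-peakedness on a tree. -/
def SinglePeaked (T : SimpleGraph A) (P : Pref A) : Prop :=
  ∀ c d : A, c ≠ d → c ∈ intv T (peak P) d → prefers P c d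

/-- Semi-single-peakedness on `T` w.r.t. the threshold `xbar`. -/
def SemiSP (T : SimpleGraph A) (xbar : A) (P : Pref A) : Prop :=
  (∀ c d : A, c ∈ intv T (peak P) xbar → d ∈ intv T (peak P) xbar → c ≠ d →
    c ∈ intv T (peak P) d → prefers P c d) ∧
  (∀ c : A, c ∉ intv T (peak P) xbar →
    prefers P (projOn T (intv T (peak P) xbar) c) c)

/-- A semi-single-peaked domain. -/
def SemiSPDomain (D : Set (Pref A)) : Prop :=
  ∃ (T : SimpleGraph A) (xbar : A), T.IsTree ∧
    D ⊆ {P | SemiSP T xbar P} ∧ (adjGraph D).Connected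

/-- `A^{a⇀b}`: the alternatives whose path to `b` goes through `a`. -/
def sideSet (T : SimpleGraph A) (a b : A) : Set A := {z | a ∈ intv T z b}

/-- `x = max^P(B)`: `x` is `P`'s best alternative of `B`. -/
def IsBestOf (P : Pref A) (x : A) (B : Set A) : Prop :=
  x ∈ B ∧ ∀ y ∈ B, y ≠ x → prefers P x y

/-- `a` and `b` are dual-thresholds in the tree `T`. -/
def DualThresholds (T : SimpleGraph A) (a b : A) : Prop :=
  a ≠ b ∧ ∀ c : A, c ∉ intv T a b →
    projOn T (intv T a b) c = a ∨ projOn T (intv T a b) c = b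

/-- An `(a,b)`-semi-hybrid preference on `T`. -/
def SemiHybridPref (T : SimpleGraph A) (a b : A) (P : Pref A) : Prop :=
  (peak P ∈ sideSet T a b \ {a} → SemiSP T a P ∧ IsBestOf P b (sideSet T b a)) ∧
  (peak P ∈ sideSet T b a \ {b} → SemiSP T b P ∧ IsBestOf P a (sideSet T a b)) ∧
  (peak P ∈ intv T a b → IsBestOf P a (sideSet T a b) ∧ IsBestOf P b (sideSet T b a))

/-- `x` is a leaf of the subgraph of `G` induced on `B`. -/
def IsLeafOn (G : SimpleGraph A) (B : Set A) (x : A) : Prop :=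
  x ∈ B ∧ ∃! y, y ∈ B ∧ G.Adj x y

/-- `D` is an `(a,b)`-semi-hybrid domain on the tree `T`. -/
def SemiHybridDomainOn (D : Set (Pref A)) (T : SimpleGraph A) (a b : A) : Prop :=
  T.IsTree ∧ DualThresholds T a b ∧ D ⊆ {P | SemiHybridPref T a b P} ∧
  (adjGraph D).Connected ∧
  (¬ ∃ (T' : SimpleGraph A) (a' b' : A), T'.IsTree ∧ DualThresholds T' a' b' ∧
      D ⊆ {P | SemiHybridPref T' a' b' P} ∧ intv T' a' b' ⊂ intv T a b) ∧
  ((adjGraph D).IsTree →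
    ∀ x : A, IsLeafOn (adjGraph D) (intv T a b) x →
      ∃ P ∈ D, ¬ SemiSP (adjGraph D) x P)

/-- `D` is a semi-hybrid domain. -/
def SemiHybridDomain (D : Set (Pref A)) : Prop :=
  ∃ (T : SimpleGraph A) (a b : A), SemiHybridDomainOn D T a b

/-- An `(a,b)`-hybrid preference on `T`. -/
def HybridPref (T : SimpleGraph A) (a b : A) (P : Pref A) : Prop :=
  (∀ y z : A, ((y ∈ sideSet T a b ∧ z ∈ sideSet T a b) ∨
      (y ∈ sideSet T b a ∧ z ∈ sideSet T b a)) → y ≠ z →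
    y ∈ intv T (peak P) z → prefers P y z) ∧
  (peak P ∈ sideSet T a b \ {a} → IsBestOf P a (intv T a b)) ∧
  (peak P ∈ sideSet T b a \ {b} → IsBestOf P b (intv T a b))

/-- `D` is an `(a,b)`-hybrid domain on the tree `T`. -/
def HybridDomainOn (D : Set (Pref A)) (T : SimpleGraph A) (a b : A) : Prop :=
  T.IsTree ∧ DualThresholds T a b ∧ D ⊆ {P | HybridPref T a b P} ∧
  (adjGraph D).Connected ∧
  (¬ ∃ (T' : SimpleGraph A) (a' b' : A), T'.IsTree ∧ DualThresholds T' a' b' ∧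
      D ⊆ {P | HybridPref T' a' b' P} ∧ intv T' a' b' ⊂ intv T a b) ∧
  3 ≤ (intv T a b).ncard

/-- `f` is an `(a,b)`-hybrid rule on the tree `T`. -/
def IsHybridRule (D : Set (Pref A)) {n : ℕ} (f : (Fin n → Pref A) → A)
    (T : SimpleGraph A) (a b : A) : Prop :=
  T.IsTree ∧ DualThresholds T a b ∧ 3 ≤ (intv T a b).ncard ∧
  ∃ i : Fin n, ∀ P : Fin n → Pref A, InDom D P →
    (peak (P i) ∈ intv T a b → f P = peak (P i)) ∧
    (peak (P i) ∈ sideSet T a b \ {a} → f P = projOn T (gammaSet T P) a) ∧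
    (peak (P i) ∈ sideSet T b a \ {b} → f P = projOn T (gammaSet T P) b)

/-- The PNT rule on `T` w.r.t. the edge `(x, y)`, with the two distinguished voters `i, j`. -/
noncomputable def pntRule (T : SimpleGraph A) (x y : A) {n : ℕ} (i j : Fin n)
    (P : Fin n → Pref A) : A :=
  if peak (P i) ∈ sideSet T y x then peak (P i)
  else if peak (P j) ∈ sideSet T x y then projOn T (gammaSet T P) x
  else if prefers (P j) x y then x else y

/-- `(x, y)` is a critical spot in `T` for the domain `D`. -/
def CriticalSpot (D : Set (Pref A)) (T : SimpleGraph A) (x y : A) : Prop :=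
  T.Adj x y ∧
  (∀ P ∈ D, peak P ∈ sideSet T x y → SemiSP T y P) ∧
  (∀ P ∈ D, peak P ∈ sideSet T y x → IsBestOf P x (sideSet T x y)) ∧
  (∃ P ∈ D, ∃ P' ∈ D, peak P = peak P' ∧ peak P ∈ sideSet T y x ∧
    prefers P y x ∧ prefers P' x y)

/-- `x` is a path in the graph `G` (pairwise distinct, consecutive vertices adjacent). -/
def IsPathIn (G : SimpleGraph A) {v : ℕ} (x : Fin v → A) : Prop :=
  Function.Injective x ∧
  ∀ (k : ℕ) (h : k + 1 < v), G.Adj (x ⟨k, Nat.lt_of_succ_lt h⟩) (x ⟨k + 1, h⟩)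

/-- `x` is a cycle in the graph `G`. -/
def IsCycleIn (G : SimpleGraph A) {v : ℕ} (x : Fin v → A) : Prop :=
  Function.Injective x ∧
  (∀ (k : ℕ) (h : k + 1 < v), G.Adj (x ⟨k, Nat.lt_of_succ_lt h⟩) (x ⟨k + 1, h⟩)) ∧
  ∀ (h : 0 < v), G.Adj (x ⟨v - 1, Nat.sub_lt h Nat.one_pos⟩) (x ⟨0, h⟩)

/-- The line `L^A` induced by the ranking of the preference `P`. -/
noncomputable def lineOf (P : Pref A) : SimpleGraph A :=
  SimpleGraph.fromRel (fun a b =>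
    ∃ k : ℕ, k + 1 < Fintype.card A ∧ rk P k = a ∧ rk P (k + 1) = b)

/-- The median of three natural numbers. -/
def med3 (a b c : ℕ) : ℕ := max (min a b) (min (max a b) c)

/-- The two-voter profile in which voter `i` reports `Pi` and the other voter reports `Q`. -/
noncomputable def prof2 (i : Fin 2) (Pi Q : Pref A) : Fin 2 → Pref A :=
  Function.update (fun _ => Q) i Pi


/-! ## Helper material -/

lemma sp_of_le (P : Pref A) {a b : A} (h : P.symm a ≤ P.symm b) : a = b ∨ prefers P a b := by
  rcases h.lt_or_eq with h | h
  · exact Or.inr h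
  · exact Or.inl (P.symm.injective h)

lemma le_of_sp (P : Pref A) {a b : A} (h : a = b ∨ prefers P a b) : P.symm a ≤ P.symm b := by
  rcases h with h | h
  · rw [h]
  · exact le_of_lt h

lemma lt_of_le_ne (P : Pref A) {a b : A} (h : P.symm a ≤ P.symm b) (hab : a ≠ b) :
    prefers P a b := (sp_of_le P h).resolve_left hab

lemma peak_le (P : Pref A) (a : A) : P.symm (peak P) ≤ P.symm a := by
  have h : 0 < Fintype.card A := Fintype.card_pos
  unfold peak rk
  rw [dif_pos h, Equiv.symm_apply_apply]
  exact Nat.zero_le _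

/-- Consequence of an adjacency pair. -/
lemma swap_pos {P P' : Pref A} {u v : A} (hc : 2 ≤ Fintype.card A)
    (h1 : peak P = u) (h2 : second P = v)
    (hk : ∀ k : ℕ, 2 ≤ k → rk P k = rk P' k) (a : A) (hau : a ≠ u) (hav : a ≠ v) :
    P.symm a = P'.symm a ∧ 2 ≤ (P.symm a).val := by
  have ha : rk P (P.symm a).val = a := by
    unfold rk; rw [dif_pos (P.symm a).isLt]; simp
  have h2' : 2 ≤ (P.symm a).val := by
    by_contra hlt
    have : (P.symm a).val = 0 ∨ (P.symm a).val = 1 := by omega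
    rcases this with h | h
    · rw [h] at ha; exact hau (ha.symm.trans h1)
    · rw [h] at ha; exact hav (ha.symm.trans h2)
  refine ⟨?_, h2'⟩
  have h3 := hk _ h2'
  rw [ha] at h3
  unfold rk at h3
  rw [dif_pos (P.symm a).isLt] at h3
  rw [Equiv.eq_symm_apply]
  exact h3.symm

lemma pos_peak (P : Pref A) : (P.symm (peak P)).val = 0 := by
  have h : 0 < Fintype.card A := Fintype.card_pos
  unfold peak rk
  rw [dif_pos h, Equiv.symm_apply_apply]

lemma pos_second (P : Pref A) (hc : 2 ≤ Fintype.card A) : (P.symm (second P)).val = 1 := by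
  have h : 1 < Fintype.card A := hc
  unfold second rk
  rw [dif_pos h, Equiv.symm_apply_apply]

/-- `z'` results from `z` when a report moves from `u` to the adjacent `v`. -/
def SwapRel (u v z z' : A) : Prop := z' = z ∨ (z = u ∧ z' = v)

lemma swap_change {P P' : Pref A} {u v a b : A} (hc : 2 ≤ Fintype.card A)
    (h1 : peak P = u) (h2 : second P = v) (h3 : peak P' = v) (h4 : second P' = u)
    (hk : ∀ k : ℕ, 2 ≤ k → rk P k = rk P' k)
    (hab : P.symm a ≤ P.symm b) (hba : P'.symm b ≤ P'.symm a) : SwapRel u v a b := by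
  have pu := pos_peak P
  have pv := pos_second P hc
  have pv' := pos_peak P'
  have pu' := pos_second P' hc
  rw [h1] at pu; rw [h2] at pv; rw [h3] at pv'; rw [h4] at pu'
  have key := swap_pos (P' := P') hc h1 h2 hk
  by_cases e : b = a
  · exact Or.inl e
  right
  have n1 : P.symm a ≠ P.symm b := fun h => e (P.symm.injective h).symm
  have n2 : P'.symm a ≠ P'.symm b := fun h => e (P'.symm.injective h).symm
  rw [Fin.le_def] at hab hba
  rw [Ne, Fin.ext_iff] at n1 n2
  by_cases au : a = u
  · by_cases bv : b = v
    · exact ⟨au, bv⟩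
    · have hb := key b (fun h => e (h.trans au.symm)) bv
      have : (P'.symm b).val = (P.symm b).val := by rw [hb.1]
      rw [au] at hba n2
      omega
  · by_cases av : a = v
    · by_cases bu : b = u
      · rw [av, bu] at hab; omega
      · have hb := key b bu (fun h => e (h.trans av.symm))
        have : (P'.symm b).val = (P.symm b).val := by rw [hb.1]
        rw [av] at hba n2
        omega
    · have ha := key a au av
      have : (P'.symm a).val = (P.symm a).val := by rw [ha.1]
      by_cases bu : b = u
      · rw [bu] at hab; omega
      · by_cases bv : b = v
        · rw [bv] at hab; omega
        · have hb := key b bu bv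
          have : (P'.symm b).val = (P.symm b).val := by rw [hb.1]
          omega

/-! ### Cuts -/

/-- `S` is the side of `u` of the bridge `u - v`. -/
def IsCut (G : SimpleGraph A) (S : Set A) (u v : A) : Prop :=
  G.Adj u v ∧ u ∈ S ∧ v ∉ S ∧ ∀ p p', G.Adj p p' → p ∈ S → p' ∉ S → p = u ∧ p' = v

lemma conn_closed {G : SimpleGraph A} (hG : G.Connected) (S : Set A) {a : A} (ha : a ∈ S)
    (hcl : ∀ p p', G.Adj p p' → p ∈ S → p' ∈ S) (b : A) : b ∈ S := by
  obtain ⟨w⟩ := hG.preconnected a b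
  induction w with
  | nil => exact ha
  | cons h _ ih => exact ih (hcl _ _ h ha)

lemma IsCut.compl {G : SimpleGraph A} {S : Set A} {u v : A} (h : IsCut G S u v) :
    IsCut G Sᶜ v u := by
  obtain ⟨h1, h2, h3, h4⟩ := h
  refine ⟨h1.symm, h3, fun h => h h2, fun p p' hp hpS hp' => ?_⟩
  have := h4 p' p hp.symm (not_not.mp hp') hpS
  exact ⟨this.2, this.1⟩

lemma side_ind {G : SimpleGraph A} (hG : G.Connected) {S : Set A} {u v : A}
    (hS : IsCut G S u v) (Q : A → Prop) {c : A} (hc : c ∈ S) (hQc : Q c)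
    (hQ : ∀ p p', G.Adj p p' → p ∈ S → p' ∈ S → Q p → Q p') : ∀ p ∈ S, Q p := by
  obtain ⟨huv, hu, hv, hb⟩ := hS
  have hQu : Q u := by
    by_contra hn
    have := conn_closed hG {p | p ∈ S ∧ Q p} (a := c) ⟨hc, hQc⟩ (by
      rintro p p' hp ⟨hpS, hpQ⟩
      have hp' : p' ∈ S := by
        by_contra h
        have := (hb p p' hp hpS h).1
        exact hn (this ▸ hpQ)
      exact ⟨hp', hQ p p' hp hpS hp' hpQ⟩) v
    exact hv this.1
  intro p hp
  by_contra hn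
  have := conn_closed hG {p | p ∈ S ∧ ¬ Q p} (a := p) ⟨hp, hn⟩ (by
      rintro p p' hpp ⟨hpS, hpQ⟩
      have hp' : p' ∈ S := by
        by_contra h
        have := (hb p p' hpp hpS h).1
        exact hpQ (this ▸ hQu)
      exact ⟨hp', fun h => hpQ (hQ p' p hpp.symm hp' hpS h)⟩) v
  exact hv this.1

lemma IsCut.subset {G : SimpleGraph A} (hG : G.Connected) {S S' : Set A} {u v : A}
    (hS : IsCut G S u v) (hS' : IsCut G S' u v) : S ⊆ S' := by
  refine side_ind hG hS (fun p => p ∈ S') hS.2.1 hS'.2.1 ?_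
  intro p p' hp hpS hpS' h
  by_contra hn
  have := (hS'.2.2.2 p p' hp h hn).2
  exact hS.2.2.1 (this ▸ hpS')

lemma IsCut.unique {G : SimpleGraph A} (hG : G.Connected) {S S' : Set A} {u v : A}
    (hS : IsCut G S u v) (hS' : IsCut G S' u v) : S = S' :=
  Set.Subset.antisymm (hS.subset hG hS') (hS'.subset hG hS)

/-- In a tree, there is a neighbour of `w` in the direction of `p`. -/
lemma toward {G : SimpleGraph A} (hG : G.Connected)
    (hcut : ∀ u v, G.Adj u v → ∃ S, IsCut G S u v) {w p : A} (hwp : w ≠ p) :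
    ∃ w' T, IsCut G T w' w ∧ p ∈ T := by
  by_contra hno
  push Not at hno
  have hmem : ∀ w' T, IsCut G T w w' → p ∈ T := by
    intro w' T hT
    by_contra hn
    exact hno w' Tᶜ hT.compl hn
  have := conn_closed hG {q | q ≠ w ∧ ∀ w' T, IsCut G T w w' → q ∈ T} (a := p)
    ⟨hwp.symm, hmem⟩ (by
      rintro q q' hq ⟨hqw, hqT⟩
      refine ⟨?_, ?_⟩
      · rintro rfl
        obtain ⟨S, hS⟩ := hcut q' q hq.symm
        exact hS.2.2.1 (hqT _ _ hS)
      · intro w' T hT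
        by_contra hn
        exact hqw (hT.2.2.2 q q' hq (hqT _ _ hT) hn).1) w
  exact this.1 rfl

/-- The properties of the derived two-voter rule. -/
structure TwoRule (D : Set (Pref A)) (g : A → A → A) : Prop where
  unan : ∀ a, g a a = a
  s1 : ∀ u v c, (adjGraph D).Adj u v → SwapRel u v (g u c) (g v c)
  s2 : ∀ u v c, (adjGraph D).Adj u v → SwapRel u v (g c u) (g c v)
  sp1 : ∀ P ∈ D, ∀ a c, P.symm (g (peak P) c) ≤ P.symm (g a c)
  sp2 : ∀ P ∈ D, ∀ a c, P.symm (g c (peak P)) ≤ P.symm (g c a)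
  mono : ∀ u v, (adjGraph D).Adj u v → g u v = u → g v u = u
  cut : ∀ u v, (adjGraph D).Adj u v → g u v = v →
    ∃ S, IsCut (adjGraph D) S u v ∧ ∀ P ∈ D, peak P ∈ S → prefers P u v

lemma TwoRule.edge {D : Set (Pref A)} {g : A → A → A} (hg : TwoRule D g) {u v : A}
    (h : (adjGraph D).Adj u v) : g u v = u ∨ g u v = v := by
  rcases hg.s1 u v v h with h | h
  · rw [hg.unan] at h; exact Or.inr h.symm
  · exact Or.inl h.1

lemma TwoRule.hasCut {D : Set (Pref A)} {g : A → A → A} (hg : TwoRule D g) (u v : A)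
    (h : (adjGraph D).Adj u v) : ∃ S, IsCut (adjGraph D) S u v := by
  rcases hg.edge h with h1 | h1
  · obtain ⟨S, hS, -⟩ := hg.cut v u h.symm (hg.mono u v h h1)
    exact ⟨Sᶜ, hS.compl⟩
  · obtain ⟨S, hS, -⟩ := hg.cut u v h h1
    exact ⟨S, hS⟩

lemma TwoRule.spKnown {D : Set (Pref A)} {g : A → A → A} (hg : TwoRule D g)
    (hG : (adjGraph D).Connected) {u v : A} {S : Set A} (hS : IsCut (adjGraph D) S u v)
    (h : g u v = v) : ∀ P ∈ D, peak P ∈ S → prefers P u v := by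
  obtain ⟨S', hS', h'⟩ := hg.cut u v hS.1 h
  rw [hS.unique hG hS']
  exact h'

lemma exists_best (P : Pref A) (X : Set A) (hX : X.Nonempty) :
    ∃ c ∈ X, ∀ d ∈ X, P.symm c ≤ P.symm d := by
  obtain ⟨c, hc, h⟩ := Set.exists_min_image X P.symm X.toFinite hX
  exact ⟨c, hc, h⟩

lemma adj_prefs {D : Set (Pref A)} {u v : A} (h : (adjGraph D).Adj u v) : DomAdjacent D u v := by
  unfold adjGraph at h
  rw [SimpleGraph.fromRel_adj] at h
  rcases h.2 with h | h
  · exact h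
  · obtain ⟨P, hP, P', hP', h1, h2, h3, h4, h5⟩ := h
    exact ⟨P', hP', P, hP, h3, h4, h1, h2, fun k hk => (h5 k hk).symm⟩

lemma prefers_or (P : Pref A) {a b : A} (h : a ≠ b) : prefers P a b ∨ prefers P b a := by
  unfold prefers
  rcases lt_trichotomy (P.symm a) (P.symm b) with h1 | h1 | h1
  · exact Or.inl h1
  · exact absurd (P.symm.injective h1) h
  · exact Or.inr h1

/-- The two-voter non-tops-only candidate rule. -/
noncomputable def candRule (g : A → A → A) (X : Set A) (x y : A) (R : Fin 2 → Pref A) : A :=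
  if peak (R 0) ∈ X then
    (if peak (R 1) ∈ X then g (peak (R 0)) (peak (R 1))
      else if prefers (R 1) x y then x else y)
  else peak (R 0)

lemma cand_sp {D : Set (Pref A)} {g : A → A → A} (hg : TwoRule D g) {X : Set A} {x y : A}
    (hx : x ∈ X) (hy : y ∉ X)
    (hgX : ∀ p ∈ X, ∀ c ∈ X, g p c ∈ X)
    (hgx1 : ∀ c ∈ X, g x c = x) (hgx2 : ∀ c ∈ X, g c x = x)
    (hyb : ∀ P ∈ D, peak P ∈ X → ∀ a, a ∉ X → P.symm y ≤ P.symm a)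
    (hxy : ∀ P ∈ D, peak P ∈ X → prefers P x y)
    (hxb : ∀ P ∈ D, peak P ∉ X → ∀ c ∈ X, P.symm x ≤ P.symm c) :
    StrategyProof D (candRule g X x y) := by
  intro R hR i Q hQ
  apply sp_of_le
  have hxy' : ∀ P ∈ D, peak P ∈ X → P.symm x ≤ P.symm y := fun P hP h => le_of_lt (hxy P hP h)
  fin_cases i
  · have e0 : (Function.update R (0 : Fin 2) Q) 0 = Q := by simp
    have e1 : (Function.update R (0 : Fin 2) Q) 1 = R 1 := by simp
    simp only [Fin.zero_eta, Fin.isValue]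
    unfold candRule
    rw [e0, e1]
    have hR0 := hR 0
    by_cases h0 : peak (R 0) ∈ X
    · rw [if_pos h0]
      by_cases h1 : peak (R 1) ∈ X
      · rw [if_pos h1, if_pos h1]
        by_cases hq : peak Q ∈ X
        · rw [if_pos hq]; exact hg.sp1 _ hR0 _ _
        · rw [if_neg hq]
          have := hg.sp1 _ hR0 x (peak (R 1))
          rw [hgx1 _ h1] at this
          exact this.trans ((hxy' _ hR0 h0).trans (hyb _ hR0 h0 _ hq))
      · rw [if_neg h1, if_neg h1]
        by_cases hq : peak Q ∈ X
        · rw [if_pos hq]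
        · rw [if_neg hq]
          split_ifs
          · exact (hxy' _ hR0 h0).trans (hyb _ hR0 h0 _ hq)
          · exact hyb _ hR0 h0 _ hq
    · rw [if_neg h0]; exact peak_le _ _
  · have e0 : (Function.update R (1 : Fin 2) Q) 0 = R 0 := by simp
    have e1 : (Function.update R (1 : Fin 2) Q) 1 = Q := by simp
    simp only [Fin.mk_one, Fin.isValue]
    unfold candRule
    rw [e0, e1]
    have hR1 := hR 1
    by_cases h0 : peak (R 0) ∈ X
    · rw [if_pos h0, if_pos h0]
      by_cases h1 : peak (R 1) ∈ X
      · rw [if_pos h1]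
        by_cases hq : peak Q ∈ X
        · rw [if_pos hq]; exact hg.sp2 _ hR1 _ _
        · rw [if_neg hq]
          have := hg.sp2 _ hR1 x (peak (R 0))
          rw [hgx2 _ h0] at this
          split_ifs
          · exact this
          · exact this.trans (hxy' _ hR1 h1)
      · rw [if_neg h1]
        have hle : ∀ z, z = x ∨ z = y →
            (R 1).symm (if prefers (R 1) x y then x else y) ≤ (R 1).symm z := by
          intro z hz
          split_ifs with hp
          · rcases hz with rfl | rfl
            · exact le_rfl
            · exact le_of_lt hp
          · have : (R 1).symm y ≤ (R 1).symm x := not_lt.mp hp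
            rcases hz with rfl | rfl
            · exact this
            · exact le_rfl
        by_cases hq : peak Q ∈ X
        · rw [if_pos hq]
          exact (hle x (Or.inl rfl)).trans (hxb _ hR1 h1 _ (hgX _ h0 _ hq))
        · rw [if_neg hq]
          apply hle
          split_ifs
          · exact Or.inl rfl
          · exact Or.inr rfl
    · rw [if_neg h0, if_neg h0]

/-- Tops-onlyness forces agreement, hence the desired ranking across a lone-voter edge. -/
lemma cand_conclude {D : Set (Pref A)} (hcard : 3 ≤ Fintype.card A)
    (hG : (adjGraph D).Connected) (htod : TopsOnlyDomain D)
    (hrich : ∀ a : A, ∃ P ∈ D, peak P = a)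
    {g : A → A → A} (hg : TwoRule D g) {X : Set A} {x y : A}
    (hX : IsCut (adjGraph D) X x y)
    (hsp : StrategyProof D (candRule g X x y)) :
    ∀ P ∈ D, peak P ∉ X → prefers P y x := by
  have hne : x ≠ y := hX.1.ne
  have hrule : IsRule D (candRule g X x y) := by
    intro R hR a ha
    unfold candRule
    rw [ha 0, ha 1]
    split_ifs
    · exact hg.unan a
    · rfl
  have hto := htod 2 le_rfl _ hrule hsp
  obtain ⟨Q, hQ, hQx⟩ := hrich x
  have hagree : ∀ P ∈ D, ∀ P' ∈ D, peak P = peak P' → peak P ∉ X → prefers P y x →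
      prefers P' y x := by
    intro P hP P' hP' hpp hpX hyx
    by_contra hn
    have hxy' : prefers P' x y := (prefers_or P' hne).resolve_right hn
    have hxyn : ¬ prefers P x y := lt_asymm hyx
    have := hto ![Q, P] ![Q, P'] (by intro i; fin_cases i <;> simp [hQ, hP])
      (by intro i; fin_cases i <;> simp [hQ, hP']) (by intro i; fin_cases i <;> simp [hpp])
    unfold candRule at this
    have hx := hX.2.1
    simp [hQx, hx, hpX, hxyn, hxy', ← hpp] at this
    exact hne this.symm
  have key : ∀ p ∈ Xᶜ, ∀ P ∈ D, peak P = p → prefers P y x := by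
    refine side_ind hG hX.compl (fun p => ∀ P ∈ D, peak P = p → prefers P y x) hX.2.2.1 ?_ ?_
    · intro P hP hp
      refine lt_of_le_ne P ?_ hne.symm
      rw [← hp]; exact peak_le _ _
    · intro z z' hz hzX hzX' hall P' hP' hpk
      obtain ⟨P0, hP0, P1, hP1, h1, h2, h3, h4, h5⟩ := adj_prefs hz
      have hP0yx := hall P0 hP0 h1
      refine hagree P1 hP1 P' hP' (h3.trans hpk.symm) (by rw [h3]; exact hzX') ?_
      have hxz : x ≠ z := fun h => hzX (h ▸ hX.2.1)
      have hxz' : x ≠ z' := fun h => hzX' (h ▸ hX.2.1)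
      by_contra hn
      have hxy' : prefers P1 x y := (prefers_or P1 hne).resolve_right hn
      rcases swap_change (by omega) h1 h2 h3 h4 h5 (le_of_lt hP0yx) (le_of_lt hxy') with h | h
      · exact hne h
      · exact hxz' h.2
  exact fun P hP hp => key _ hp P hP rfl

/-- If all edges of a side are well behaved, then the gate is the best of the side. -/
lemma gate_best {D : Set (Pref A)} (hG : (adjGraph D).Connected) {g : A → A → A}
    (hg : TwoRule D g) {X : Set A} {x y : A} (hX : IsCut (adjGraph D) X x y)
    (hsm : ∀ c c' T, IsCut (adjGraph D) T c c' → T ⊂ X →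
      ∀ P ∈ D, peak P ∉ T → prefers P c' c) :
    ∀ P ∈ D, peak P ∉ X → ∀ c ∈ X, P.symm x ≤ P.symm c := by
  intro P hP hpk
  obtain ⟨c, hc, hbest⟩ := exists_best P X ⟨x, hX.2.1⟩
  have hcx : c = x := by
    by_contra hcx
    obtain ⟨c', T, hT, hpT⟩ := toward hG hg.hasCut (w := c) (p := peak P)
      (fun h => hpk (h ▸ hc))
    have hc' : c' ∈ X := by
      by_contra hn
      exact hcx (hX.2.2.2 c c' hT.1.symm hc hn).1
    have hsub : Xᶜ ⊆ T := by
      refine side_ind hG hX.compl (fun p => p ∈ T) hpk hpT ?_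
      intro p p' hp hpX hpX' hpT
      by_contra hn
      have := (hT.2.2.2 p p' hp hpT hn).2
      exact hpX' (this ▸ hc)
    have hss : Tᶜ ⊂ X := by
      refine ⟨fun q hq => ?_, fun h => h hc' hT.2.1⟩
      by_contra hn
      exact hq (hsub hn)
    have := hsm c c' Tᶜ hT.compl hss P hP (fun h => h hpT)
    exact absurd (hbest c' hc') (not_le.mpr this)
  rw [← hcx]; exact hbest

/-- The far gate is the best of the far side, for a lone-voter edge. -/
lemma far_best {D : Set (Pref A)} (hG : (adjGraph D).Connected) {g : A → A → A}
    (hg : TwoRule D g) {X : Set A} {x y : A} (hX : IsCut (adjGraph D) X x y)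
    (hxy : g x y = y) :
    ∀ P ∈ D, peak P ∈ X → ∀ a, a ∉ X → P.symm y ≤ P.symm a := by
  intro P hP hpk
  obtain ⟨o, ho, hbest⟩ := exists_best P Xᶜ ⟨y, hX.2.2.1⟩
  have hoy : o = y := by
    by_contra hoy
    have h1 : g x o ∈ Xᶜ := by
      refine side_ind hG hX.compl (fun o => g x o ∈ Xᶜ) hX.2.2.1
        (by rw [hxy]; exact hX.2.2.1) ?_ o ho
      intro p p' hp hpX hpX' h
      rcases hg.s2 p p' x hp with h' | h'
      · rw [h']; exact h
      · rw [h'.2]; exact hpX'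
    have h2 : g (peak P) o ∈ Xᶜ := by
      refine side_ind hG hX (fun p => g p o ∈ Xᶜ) hX.2.1 h1 ?_ _ hpk
      intro p p' hp hpX hpX' h
      rcases hg.s1 p p' o hp with h' | h'
      · rw [h']; exact h
      · exact absurd hpX (by rw [← h'.1]; exact h)
    have h3 : g (peak P) o = o := by
      have a1 := hg.sp1 P hP o o
      rw [hg.unan] at a1
      exact P.symm.injective (le_antisymm a1 (hbest _ h2))
    obtain ⟨o', T, hT, hpT⟩ := toward hG hg.hasCut (w := o) (p := peak P)
      (fun h => ho (h ▸ hpk))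
    have ho' : o' ∈ Xᶜ := by
      intro hn
      exact hoy (hX.2.2.2 o' o hT.1 hn ho).2
    have h4 : g o' o = o := by
      refine side_ind hG hT (fun p => g p o = o) hpT h3 ?_ _ hT.2.1
      intro p p' hp hpT hpT' h
      rcases hg.s1 p p' o hp with h' | h'
      · rw [h']; exact h
      · exact absurd hpT (by rw [← h'.1, h]; exact hT.2.2.1)
    have := hg.spKnown hG hT h4 P hP hpT
    exact absurd (hbest o' ho') (not_le.mpr this)
  rw [← hoy]; exact hbest

lemma all_sp {D : Set (Pref A)} (hcard : 3 ≤ Fintype.card A)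
    (hG : (adjGraph D).Connected) (htod : TopsOnlyDomain D)
    (hrich : ∀ a : A, ∃ P ∈ D, peak P = a)
    {g : A → A → A} (hg : TwoRule D g) :
    ∀ (N : ℕ) (X : Set A) (x y : A), X.ncard ≤ N → IsCut (adjGraph D) X x y →
      ∀ P ∈ D, peak P ∉ X → prefers P y x := by
  intro N
  induction N with
  | zero =>
    intro X x y hN hX
    have : X = ∅ := (Set.ncard_eq_zero X.toFinite).mp (by omega)
    have h := hX.2.1
    rw [this] at h
    exact absurd h (Set.notMem_empty x)
  | succ N ih =>
    intro X x y hN hX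
    rcases hg.edge hX.1.symm with hyx | hyx
    swap
    · intro P hP hpk
      exact hg.spKnown hG hX.compl hyx P hP hpk
    have hxy : g x y = y := hg.mono y x hX.1.symm hyx
    have hne := hX.1.ne
    have hxb := gate_best hG hg hX (fun c c' T hT hTX =>
      ih T c c' (by have := Set.ncard_lt_ncard hTX X.toFinite; omega) hT)
    have hyb := far_best hG hg hX hxy
    have hnb : ∀ c, (adjGraph D).Adj x c → c ∈ X → g x c = x := by
      intro c hc hcX
      have hcy : c ≠ y := fun h => hX.2.2.1 (h ▸ hcX)
      have h1 : g y c = y := by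
        rcases hg.s2 x c y hc with h | h
        · rw [h, hyx]
        · exact absurd (h.1.symm.trans hyx) hne
      rcases hg.edge hc with h | h
      · exact h
      · rcases hg.s1 x y c hX.1 with h' | h'
        · rw [h1, h] at h'; exact absurd h'.symm hcy
        · exact h'.1
    have hgx1 : ∀ c ∈ X, g x c = x := by
      refine side_ind hG hX (fun c => g x c = x) hX.2.1 (hg.unan x) ?_
      intro p p' hp hpX hpX' h
      by_cases hpx : p = x
      · subst hpx; exact hnb p' hp hpX'
      · rcases hg.s2 p p' x hp with h' | h'
        · rw [h', h]
        · exact absurd (h'.1.symm.trans h) hpx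
    have hgx2 : ∀ c ∈ X, g c x = x := by
      refine side_ind hG hX (fun c => g c x = x) hX.2.1 (hg.unan x) ?_
      intro p p' hp hpX hpX' h
      by_cases hpx : p = x
      · subst hpx; exact hg.mono _ _ hp (hnb p' hp hpX')
      · rcases hg.s1 p p' x hp with h' | h'
        · rw [h', h]
        · exact absurd (h'.1.symm.trans h) hpx
    have hgX : ∀ p ∈ X, ∀ c ∈ X, g p c ∈ X := by
      intro p hp c hc
      refine side_ind hG hX (fun p => g p c ∈ X) hc (by rw [hg.unan]; exact hc) ?_ p hp
      intro p p' hp hpX hpX' h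
      rcases hg.s1 p p' c hp with h' | h'
      · rw [h']; exact h
      · rw [h'.2]; exact hpX'
    exact cand_conclude hcard hG htod hrich hg hX
      (cand_sp hg hX.2.1 hX.2.2.1 hgX hgx1 hgx2 hyb (hg.spKnown hG hX hxy) hxb)

/-! ### The derived two-voter rule -/

/-- Voter `0` reports `p`, voters `1,…,k` report `v`, and the others report `u`. -/
def blk {N : ℕ} (p : A) (k : ℕ) (u v : A) : Fin (N + 1) → A :=
  fun j => if j.val = 0 then p else if j.val ≤ k then v else u

lemma blk_upd0 {N : ℕ} (p q : A) (k : ℕ) (u v : A) :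
    (blk q k u v : Fin (N + 1) → A) = Function.update (blk p k u v) 0 q := by
  funext j
  by_cases h : j = 0
  · subst h; simp [blk]
  · have h' : j.val ≠ 0 := fun h' => h (Fin.ext h')
    rw [Function.update_of_ne h]
    simp [blk, h']

lemma blk_step {N : ℕ} (p : A) (k : ℕ) (u v : A) (hk : k + 1 < N + 1) :
    (blk p (k + 1) u v : Fin (N + 1) → A)
      = Function.update (blk p k u v) ⟨k + 1, hk⟩ v := by
  funext j
  by_cases h : j = ⟨k + 1, hk⟩
  · subst h; simp [blk]
  · have h' : j.val ≠ k + 1 := fun h' => h (Fin.ext h')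
    rw [Function.update_of_ne h]
    have : (j.val ≤ k + 1) ↔ (j.val ≤ k) := by omega
    simp [blk, this]

lemma blk_at {N : ℕ} (p : A) (k : ℕ) (u v : A) (hk : k + 1 < N + 1) :
    (blk p k u v : Fin (N + 1) → A) ⟨k + 1, hk⟩ = u := by
  simp [blk]

lemma blk_full {N : ℕ} (p : A) (u v u' : A) :
    (blk p N u v : Fin (N + 1) → A) = blk p 0 v u' := by
  funext j
  have := j.isLt
  by_cases h : j.val = 0
  · simp [blk, h]
  · have h1 : j.val ≤ N := by omega
    have h2 : ¬ j.val ≤ 0 := by omega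
    simp [blk, h, h1]

lemma blk_zero {N : ℕ} (p : A) (u v v' : A) :
    (blk p 0 u v : Fin (N + 1) → A) = blk p 0 u v' := by
  funext j
  by_cases h : j.val = 0
  · simp [blk, h]
  · simp [blk, h]

lemma blk_const {N : ℕ} (u v : A) : (blk u 0 u v : Fin (N + 1) → A) = fun _ => u := by
  funext j
  by_cases h : j.val = 0
  · simp [blk, h]
  · simp [blk, h]

lemma blk_perm {N : ℕ} (k : ℕ) (u v : A) (hk : k + 1 < N + 1) :
    (blk u (k + 1) u v : Fin (N + 1) → A) ∘ (Equiv.swap 0 ⟨k + 1, hk⟩) = blk v k u v := by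
  funext j
  simp only [Function.comp]
  by_cases h0 : j = 0
  · subst h0
    rw [Equiv.swap_apply_left]
    simp [blk]
  · have h0' : j.val ≠ 0 := fun h' => h0 (Fin.ext h')
    by_cases h : j = ⟨k + 1, hk⟩
    · subst h
      rw [Equiv.swap_apply_right]
      simp [blk]
    · have h' : j.val ≠ k + 1 := fun h' => h (Fin.ext h')
      rw [Equiv.swap_apply_of_ne_of_ne h0 h]
      have : (j.val ≤ k + 1) ↔ (j.val ≤ k) := by omega
      simp [blk, this, h0]

lemma twoRule_of {D : Set (Pref A)} (hcard : 3 ≤ Fintype.card A)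
    (hrich : ∀ a : A, ∃ P ∈ D, peak P = a)
    {N : ℕ} (hN : 1 ≤ N) (F : (Fin (N + 1) → A) → A)
    (hun : ∀ a, F (fun _ => a) = a)
    (hsp : ∀ P ∈ D, ∀ w i a, w i = peak P → P.symm (F w) ≤ P.symm (F (Function.update w i a)))
    (han : ∀ w (σ : Equiv.Perm (Fin (N + 1))), F (w ∘ σ) = F w) :
    TwoRule D (fun p u => F (blk p 0 u u)) := by
  have hswap : ∀ u v w i, (adjGraph D).Adj u v → w i = u →
      SwapRel u v (F w) (F (Function.update w i v)) := by
    intro u v w i huv hw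
    obtain ⟨P, hP, P', hP', h1, h2, h3, h4, h5⟩ := adj_prefs huv
    have a1 := hsp P hP w i v (hw.trans h1.symm)
    have a2 := hsp P' hP' (Function.update w i v) i u (by simp [h3])
    rw [Function.update_idem, ← hw, Function.update_eq_self] at a2
    exact swap_change (by omega) h1 h2 h3 h4 h5 a1 a2
  have hstep : ∀ u v p k, (adjGraph D).Adj u v → k + 1 < N + 1 →
      SwapRel u v (F (blk p k u v)) (F (blk p (k + 1) u v)) := by
    intro u v p k huv hk
    rw [blk_step p k u v hk]
    exact hswap u v _ _ huv (blk_at p k u v hk)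
  have hblock : ∀ u v p k, (adjGraph D).Adj u v → k < N + 1 →
      SwapRel u v (F (blk p 0 u v)) (F (blk p k u v)) := by
    intro u v p k huv
    induction k with
    | zero => intro _; exact Or.inl rfl
    | succ k ih =>
      intro hk
      have h1 := ih (by omega)
      have h2 := hstep u v p k huv hk
      have := huv.ne
      unfold SwapRel at *
      grind
  have h0 : ∀ p q k u v, (adjGraph D).Adj p q →
      SwapRel p q (F (blk p k u v)) (F (blk q k u v)) := by
    intro p q k u v hpq
    rw [blk_upd0 p q k u v]
    exact hswap p q _ _ hpq (by simp [blk])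
  have hs1 : ∀ u v c, (adjGraph D).Adj u v →
      SwapRel u v (F (blk u 0 c c)) (F (blk v 0 c c)) := fun u v c h => h0 u v 0 c c h
  have hs2 : ∀ u v c, (adjGraph D).Adj u v →
      SwapRel u v (F (blk c 0 u u)) (F (blk c 0 v v)) := by
    intro u v c h
    have := hblock u v c N h (by omega)
    rw [blk_full c u v v, blk_zero c u v u] at this
    exact this
  refine ⟨?_, hs1, hs2, ?_, ?_, ?_, ?_⟩
  · intro a
    simp only [blk_const]
    exact hun a
  · intro P hP a c
    rw [blk_upd0 (peak P) a 0 c c]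
    exact hsp P hP _ _ _ (by simp [blk])
  · intro P hP a c
    have : ∀ k, k < N + 1 →
        P.symm (F (blk c 0 (peak P) a)) ≤ P.symm (F (blk c k (peak P) a)) := by
      intro k
      induction k with
      | zero => intro _; exact le_rfl
      | succ k ih =>
        intro hk
        refine (ih (by omega)).trans ?_
        rw [blk_step c k _ a hk]
        exact hsp P hP _ _ _ (blk_at c k _ a hk)
    have := this N (by omega)
    rw [blk_full c _ a a, blk_zero c (peak P) a (peak P)] at this
    exact this
  · intro u v huv h
    obtain ⟨M, rfl⟩ : ∃ M, N = M + 1 := ⟨N - 1, by omega⟩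
    have h1 := hblock v u u M huv.symm (by omega)
    rw [blk_zero u v u v, h] at h1
    have h2 : F (blk u M v u) = u := by
      rcases h1 with h1 | h1
      · exact h1
      · exact h1.2
    have h3 := han (blk v (M + 1) v u) (Equiv.swap 0 ⟨M + 1, by omega⟩)
    rw [blk_perm M v u (by omega), h2, blk_full v v u u] at h3
    exact h3.symm
  · intro u v huv h
    have hne := huv.ne
    have hex : ∃ k, F (blk u k u v) ≠ u := by
      refine ⟨N, ?_⟩
      rw [blk_full u u v v, h]
      exact hne.symm
    have hlast : F (blk u N u v) = v := by
      rw [blk_full u u v v, h]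
    obtain ⟨k, hkN, hk1, hk2⟩ : ∃ k, k + 1 < N + 1 ∧ F (blk u k u v) = u ∧
        F (blk u (k + 1) u v) = v := by
      classical
      have hle : Nat.find hex ≤ N := Nat.find_min' hex (by rw [hlast]; exact hne.symm)
      have hpos : Nat.find hex ≠ 0 := by
        intro h0
        have := Nat.find_spec hex
        rw [h0, blk_const] at this
        exact this (hun u)
      obtain ⟨k, hk⟩ : ∃ k, Nat.find hex = k + 1 := ⟨Nat.find hex - 1, by omega⟩
      have hk1 : F (blk u k u v) = u := not_not.mp (Nat.find_min hex (by omega))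
      have hk2 := Nat.find_spec hex
      rw [hk] at hk2
      refine ⟨k, by omega, hk1, ?_⟩
      rcases hstep u v u k huv (by omega) with h' | h'
      · exact absurd (h'.trans hk1) hk2
      · exact h'.2
    have hv : F (blk v k u v) = v := by
      rw [← blk_perm k u v hkN, han, hk2]
    have hnb : ∀ u', (adjGraph D).Adj u u' → u' ≠ v → F (blk u' k u v) = u := by
      intro u' hu' hu'v
      have hg1 : F (blk u' 0 u u) = u := by
        rcases hs1 u u' u hu' with h' | h'
        · rw [h', blk_const]; exact hun u
        · exfalso
          have b1 : F (blk u' 0 v v) = u' := by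
            rcases hs2 u v u' huv with h'' | h''
            · rw [h'', h'.2]
            · exact absurd (h'.2.symm.trans h''.1) hu'.ne.symm
          rcases hs1 u u' v hu' with h'' | h''
          · rw [b1, h] at h''; exact hu'v h''
          · rw [h] at h''; exact hne h''.1.symm
      have c1 := hblock u v u' k huv (by omega)
      rw [blk_zero u' u v u, hg1] at c1
      have c2 := h0 u u' k u v hu'
      rw [hk1] at c2
      unfold SwapRel at c1 c2
      rcases c1 with c1 | c1
      · exact c1
      · rcases c2 with c2 | c2
        · exact c2
        · exact absurd (c2.2.symm.trans c1.2) hu'v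
    refine ⟨{p | F (blk p k u v) = u}, ⟨huv, hk1, ?_, ?_⟩, ?_⟩
    · intro h'
      exact hne (Eq.trans (Eq.symm h') hv)
    · intro p p' hp hpS hpS'
      have hpS : F (blk p k u v) = u := hpS
      have hpS' : F (blk p' k u v) ≠ u := hpS'
      have hpu : p = u := by
        rcases h0 p p' k u v hp with h' | h'
        · exact absurd (h'.trans hpS) hpS'
        · exact h'.1.symm.trans hpS
      subst hpu
      refine ⟨rfl, ?_⟩
      by_contra hn
      exact hpS' (hnb p' hp hn)
    · intro P hP hpS
      have hpS : F (blk (peak P) k u v) = u := hpS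
      have := hsp P hP (blk (peak P) k u v) 0 v (by simp [blk])
      rw [← blk_upd0, hpS, hv] at this
      exact lt_of_le_ne P this hne

lemma rich_of {D : Set (Pref A)} (hcard : 3 ≤ Fintype.card A)
    (hG : (adjGraph D).Connected) (a : A) : ∃ P ∈ D, peak P = a := by
  have : Nontrivial A := Fintype.one_lt_card_iff_nontrivial.mp (by omega)
  obtain ⟨b, hb⟩ := hG.preconnected.exists_adj_of_nontrivial a
  obtain ⟨P, hP, _, _, h, _⟩ := adj_prefs hb
  exact ⟨P, hP, h⟩

lemma exists_twoRule {D : Set (Pref A)} (hcard : 3 ≤ Fintype.card A)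
    (hG : (adjGraph D).Connected) (htod : TopsOnlyDomain D) {n : ℕ} (hn : 2 ≤ n)
    (f : (Fin n → Pref A) → A) (hr : IsRule D f) (hs : StrategyProof D f)
    (ha : Anonymous D f) : ∃ g, TwoRule D g := by
  have hrich := rich_of hcard hG
  choose rep hrepD hrep using hrich
  have hto := htod n hn f hr hs
  obtain ⟨N, rfl⟩ : ∃ N, n = N + 1 := ⟨n - 1, by omega⟩
  refine ⟨_, twoRule_of hcard (rich_of hcard hG) (N := N) (by omega)
    (fun w => f (fun i => rep (w i))) ?_ ?_ ?_⟩
  · intro a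
    exact hr _ (fun i => hrepD _) a (fun i => hrep _)
  · intro P hP w i a hw
    set R : Fin (N + 1) → Pref A := Function.update (fun i => rep (w i)) i P with hR
    have hRD : InDom D R := by
      intro j
      by_cases h : j = i
      · subst h; simp [hR, hP]
      · simp [hR, h, hrepD]
    have e1 : f (fun i => rep (w i)) = f R := by
      refine hto _ _ (fun j => hrepD _) hRD ?_
      intro j
      by_cases h : j = i
      · subst h; simp [hR, hrep, hw]
      · simp [hR, h]
    have e2 : (fun j => rep (Function.update w i a j)) = Function.update R i (rep a) := by
      funext j
      by_cases h : j = i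
      · subst h; simp [hR]
      · simp [hR, h]
    rw [e1, e2]
    have := le_of_sp _ (hs R hRD i (rep a) (hrepD a))
    have hRi : R i = P := by simp [hR]
    rwa [hRi] at this
  · intro w σ
    exact ha (fun i => rep (w i)) (fun i => hrepD _) σ

/-! ### The line -/

lemma line_adj (P : Pref A) (a b : A) : (lineOf P).Adj a b ↔
    ((P.symm a).val + 1 = (P.symm b).val ∨ (P.symm b).val + 1 = (P.symm a).val) := by
  have key : ∀ a b : A, (∃ k : ℕ, k + 1 < Fintype.card A ∧ rk P k = a ∧ rk P (k + 1) = b) ↔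
      (P.symm a).val + 1 = (P.symm b).val := by
    intro a b
    constructor
    · rintro ⟨k, hk, rfl, rfl⟩
      unfold rk
      rw [dif_pos hk, dif_pos (by omega : k < Fintype.card A)]
      simp
    · intro h
      have h1 := (P.symm b).isLt
      refine ⟨(P.symm a).val, by omega, ?_, ?_⟩
      · unfold rk; rw [dif_pos (P.symm a).isLt]; simp
      · unfold rk
        rw [dif_pos (by omega)]
        have : (⟨(P.symm a).val + 1, by omega⟩ : Fin (Fintype.card A)) = P.symm b := Fin.ext h
        rw [this]; simp
  unfold lineOf
  rw [SimpleGraph.fromRel_adj, key, key]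
  constructor
  · exact fun h => h.2
  · intro h
    refine ⟨?_, h⟩
    rintro rfl
    omega

lemma line_walk_le (P : Pref A) {a b : A} (w : (lineOf P).Walk a b) :
    (P.symm b).val ≤ (P.symm a).val + w.length ∧ (P.symm a).val ≤ (P.symm b).val + w.length := by
  induction w with
  | nil => simp
  | cons h w ih =>
    rw [line_adj] at h
    rw [SimpleGraph.Walk.length_cons]
    omega

lemma line_walk_ex (P : Pref A) (d : ℕ) : ∀ a b : A, (P.symm a).val + d = (P.symm b).val →
    ∃ w : (lineOf P).Walk a b, w.length = d := by
  induction d with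
  | zero =>
    intro a b h
    have : a = b := P.symm.injective (Fin.ext h)
    subst this
    exact ⟨SimpleGraph.Walk.nil, rfl⟩
  | succ d ih =>
    intro a b h
    have h1 := (P.symm b).isLt
    set c : A := P ⟨(P.symm a).val + 1, by omega⟩ with hc
    have hcp : (P.symm c).val = (P.symm a).val + 1 := by simp [hc]
    obtain ⟨w, hw⟩ := ih c b (by omega)
    have hadj : (lineOf P).Adj a c := (line_adj P a c).mpr (Or.inl hcp.symm)
    exact ⟨SimpleGraph.Walk.cons hadj w, by simp [hw]⟩

lemma line_dist_le (P : Pref A) {a b : A} (h : (P.symm a).val ≤ (P.symm b).val) :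
    (lineOf P).dist a b = (P.symm b).val - (P.symm a).val := by
  obtain ⟨w, hw⟩ := line_walk_ex P ((P.symm b).val - (P.symm a).val) a b (by omega)
  apply le_antisymm
  · rw [← hw]; exact SimpleGraph.dist_le w
  · obtain ⟨w', hw'⟩ := (SimpleGraph.Walk.reachable w).exists_walk_length_eq_dist
    have := line_walk_le P w'
    omega

lemma line_intv (P : Pref A) (p c d : A) : c ∈ intv (lineOf P) p d ↔
    (((P.symm p).val ≤ (P.symm c).val ∧ (P.symm c).val ≤ (P.symm d).val) ∨
     ((P.symm d).val ≤ (P.symm c).val ∧ (P.symm c).val ≤ (P.symm p).val)) := by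
  have hd : ∀ a b : A, (lineOf P).dist a b =
      ((P.symm b).val - (P.symm a).val) + ((P.symm a).val - (P.symm b).val) := by
    intro a b
    rcases le_total (P.symm a).val (P.symm b).val with h | h
    · rw [line_dist_le P h]; omega
    · rw [SimpleGraph.dist_comm, line_dist_le P h]; omega
  unfold intv
  rw [Set.mem_ofPred_eq, hd, hd, hd]
  omega

/-- Final step: all edges well behaved plus diversity gives single-peakedness on the line. -/
lemma final_sp {D : Set (Pref A)} (hcard : 3 ≤ Fintype.card A)
    (hG : (adjGraph D).Connected) {g : A → A → A} (hg : TwoRule D g)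
    (hall : ∀ (X : Set A) (x y : A), IsCut (adjGraph D) X x y →
      ∀ P ∈ D, peak P ∉ X → prefers P y x)
    {Pl Pu : Pref A} (hPl : Pl ∈ D) (hPu : Pu ∈ D) (hrev : Reversed Pl Pu) :
    ∀ P ∈ D, SinglePeaked (lineOf Pl) P := by
  have hgate : ∀ (X : Set A) (x y : A), IsCut (adjGraph D) X x y →
      ∀ P ∈ D, peak P ∉ X → ∀ c ∈ X, P.symm x ≤ P.symm c := fun X x y hX =>
    gate_best hG hg hX (fun c c' T hT _ => hall T c c' hT)
  have hcons : ∀ u v, (adjGraph D).Adj u v → (Pl.symm u).val < (Pl.symm v).val →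
      (Pl.symm u).val + 1 = (Pl.symm v).val := by
    intro u v huv hlt
    by_contra hn
    obtain ⟨S, hS⟩ := hg.hasCut u v huv
    have hvlt := (Pl.symm v).isLt
    set w : A := Pl ⟨(Pl.symm u).val + 1, by omega⟩ with hw
    have hwp : (Pl.symm w).val = (Pl.symm u).val + 1 := by simp [hw]
    have huv' : prefers Pl u v := hlt
    have huw : prefers Pl u w := by
      show (Pl.symm u).val < (Pl.symm w).val
      omega
    have hwv : prefers Pl w v := by
      show (Pl.symm w).val < (Pl.symm v).val
      omega
    have hpl : peak Pl ∈ S := by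
      by_contra h
      exact lt_asymm huv' (hall S u v hS Pl hPl h)
    have hpu : peak Pu ∉ S := by
      intro h
      have h1 := hall Sᶜ v u hS.compl Pu hPu (fun h' => h' h)
      exact lt_asymm h1 ((hrev u v).mp huv')
    by_cases hwS : w ∈ S
    · exact absurd (hgate S u v hS Pu hPu hpu w hwS) (not_le.mpr ((hrev u w).mp huw))
    · exact absurd (hgate Sᶜ v u hS.compl Pl hPl (fun h' => h' hpl) w hwS) (not_le.mpr hwv)
  intro P hP c d hcd hc
  rw [line_intv] at hc
  have hcd' : (Pl.symm c).val ≠ (Pl.symm d).val := fun h =>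
    hcd (Pl.symm.injective (Fin.ext h))
  -- a set whose boundary edges start at `c`, containing the peak but not `d`
  have main : ∀ S : Set A, c ∈ S → peak P ∈ S → d ∉ S →
      (∃ e, ∀ p p', (adjGraph D).Adj p p' → p ∈ S → p' ∉ S → p = c ∧ p' = e) →
      prefers P c d := by
    rintro S hcS hpS hdS ⟨e, he⟩
    have : ∃ p p', (adjGraph D).Adj p p' ∧ p ∈ S ∧ p' ∉ S := by
      by_contra hno
      push Not at hno
      exact hdS (conn_closed hG S hcS hno d)
    obtain ⟨p, p', hpp, hp, hp'⟩ := this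
    obtain ⟨rfl, rfl⟩ := he p p' hpp hp hp'
    have hcut : IsCut (adjGraph D) S p p' := ⟨hpp, hp, hp', he⟩
    have h1 : prefers P p p' := hall Sᶜ p' p hcut.compl P hP (fun h => h hpS)
    have h2 := hgate Sᶜ p' p hcut.compl P hP (fun h => h hpS) d hdS
    exact lt_of_lt_of_le h1 h2
  rcases hc with ⟨h1, h2⟩ | ⟨h1, h2⟩
  · have hdlt := (Pl.symm d).isLt
    refine main {a | (Pl.symm a).val ≤ (Pl.symm c).val} (by rw [Set.mem_ofPred_eq]) h1
      (by rw [Set.mem_ofPred_eq]; omega)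
      ⟨Pl ⟨(Pl.symm c).val + 1, by omega⟩, ?_⟩
    intro p p' hpp hp hp'
    rw [Set.mem_ofPred_eq] at hp hp'
    have := hcons p p' hpp (by omega)
    refine ⟨Pl.symm.injective (Fin.ext (by omega)), Pl.symm.injective (Fin.ext ?_)⟩
    rw [Equiv.symm_apply_apply]
    show (Pl.symm p').val = (Pl.symm c).val + 1
    omega
  · have hclt := (Pl.symm c).isLt
    refine main {a | (Pl.symm c).val ≤ (Pl.symm a).val} (by rw [Set.mem_ofPred_eq]) h2
      (by rw [Set.mem_ofPred_eq]; omega)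
      ⟨Pl ⟨(Pl.symm c).val - 1, by omega⟩, ?_⟩
    intro p p' hpp hp hp'
    rw [Set.mem_ofPred_eq] at hp hp'
    have := hcons p' p hpp.symm (by omega)
    refine ⟨Pl.symm.injective (Fin.ext (by omega)), Pl.symm.injective (Fin.ext ?_)⟩
    rw [Equiv.symm_apply_apply]
    show (Pl.symm p').val = (Pl.symm c).val - 1
    omega

/-! ### Existence of an anonymous rule on a single-peaked domain -/

lemma exists_rule {D : Set (Pref A)} {n : ℕ} (hn : 2 ≤ n) (Pl : Pref A)
    (hsp : D ⊆ {P | SinglePeaked (lineOf Pl) P}) :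
    ∃ f : (Fin n → Pref A) → A, IsRule D f ∧ StrategyProof D f ∧ Anonymous D f := by
  have hne : (Finset.univ : Finset (Fin n)).Nonempty := ⟨⟨0, by omega⟩, Finset.mem_univ _⟩
  let μ : (Fin n → Pref A) → Fin (Fintype.card A) := fun P =>
    Finset.univ.inf' hne (fun i => Pl.symm (peak (P i)))
  have hle : ∀ P i, μ P ≤ Pl.symm (peak (P i)) := fun P i =>
    Finset.inf'_le _ (Finset.mem_univ i)
  have hat : ∀ P, ∃ i, μ P = Pl.symm (peak (P i)) := by
    intro P
    obtain ⟨i, -, hi⟩ := Finset.exists_mem_eq_inf' hne (fun i => Pl.symm (peak (P i)))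
    exact ⟨i, hi⟩
  refine ⟨fun P => Pl (μ P), ?_, ?_, ?_⟩
  · intro P hP a ha
    obtain ⟨i, hi⟩ := hat P
    simp only [hi, ha i, Equiv.apply_symm_apply]
  · intro P hP i Q hQ
    apply sp_of_le
    obtain ⟨j, hj⟩ := hat P
    by_cases hji : μ P = Pl.symm (peak (P i))
    · simp only [hji, Equiv.apply_symm_apply]; exact peak_le _ _
    · have hne' : j ≠ i := fun h => hji (h ▸ hj)
      have h1 := hle (Function.update P i Q) j
      rw [Function.update_of_ne hne', ← hj] at h1
      by_cases he : Pl (μ P) = Pl (μ (Function.update P i Q))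
      · simp only [he]; exact le_rfl
      · refine le_of_lt (hsp (hP i) _ _ he ?_)
        rw [line_intv]
        right
        simp only [Equiv.symm_apply_apply]
        exact ⟨h1, hle P i⟩
  · intro P hP σ
    have : μ (P ∘ σ) = μ P := by
      apply le_antisymm
      · obtain ⟨i, hi⟩ := hat P
        rw [hi]
        have := hle (P ∘ σ) (σ.symm i)
        simpa using this
      · obtain ⟨i, hi⟩ := hat (P ∘ σ)
        rw [hi]
        exact hle P (σ i)
    simp only [this]

/-- a non-dictatorial, tops-only, unidimensional domain admits an
anonymous and strategy-proof rule iff it is a single-peaked domain on the line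
`L^A` (determined by the labeling coming from diversity). -/
theorem stmt11_topsonly_singlepeaked (D : Set (Pref A)) (hD : D.Nonempty)
    (hcard : 3 ≤ Fintype.card A) (huni : Unidimensional D)
    (hnd : ¬ DictatorialDomain D) (htod : TopsOnlyDomain D)
    (n : ℕ) (hn : 2 ≤ n) :
    (∃ f : (Fin n → Pref A) → A, IsRule D f ∧ StrategyProof D f ∧ Anonymous D f) ↔
    (∃ Pl ∈ D, ∃ Pu ∈ D, Reversed Pl Pu ∧
      D ⊆ {P | SinglePeaked (lineOf Pl) P} ∧ (adjGraph D).Connected) := by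
  constructor
  · rintro ⟨f, hr, hs, ha⟩
    obtain ⟨hG, ⟨Pl, hPl, Pu, hPu, hrev⟩, -⟩ := huni
    have hG' : (adjGraph D).Connected := hG
    obtain ⟨g, hg⟩ := exists_twoRule hcard hG' htod hn f hr hs ha
    refine ⟨Pl, hPl, Pu, hPu, hrev, ?_, hG'⟩
    intro P hP
    exact final_sp hcard hG' hg
      (fun X x y hX => all_sp hcard hG' htod (rich_of hcard hG') hg _ X x y le_rfl hX)
      hPl hPu hrev P hP
  · rintro ⟨Pl, _, _, _, _, hsp, _⟩
    exact exists_rule hn Pl hsp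
end

section
/- Let D be a non-dictatorial, tops-only, unidimensional domain and fix n ≥ 2. There exists no anonymous and strategy-proof rule f : D^n → A if and only if D is a non-degenerate hybrid domain on the line L^A, i.e., an (a_p, a_q)-hybrid domain on L^A for some indices p < q with 1 < q − p < m − 1. -/
open Classical

set_option linter.unusedSectionVars false
set_option linter.unusedVariables false

variable {A : Type*} [Fintype A] [DecidableEq A] [Nonempty A]

namespace TOH

/-- Position (0-indexed) of an alternative in a preference. -/
noncomputable def pos (P : Pref A) (a : A) : ℕ := (P.symm a : ℕ)

theorem pos_lt (P : Pref A) (a : A) : pos P a < Fintype.card A := (P.symm a).2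

theorem pos_inj {P : Pref A} {a b : A} (h : pos P a = pos P b) : a = b :=
  P.symm.injective (Fin.ext h)

theorem pos_rk (P : Pref A) {k : ℕ} (h : k < Fintype.card A) : pos P (rk P k) = k := by
  simp [pos, rk, h]

theorem rk_pos (P : Pref A) (a : A) : rk P (pos P a) = a := by
  have := pos_lt P a
  simp [pos, rk]

theorem pref_iff {P : Pref A} {a b : A} : prefers P a b ↔ pos P a < pos P b := Iff.rfl

theorem card_pos' : 0 < Fintype.card A := Fintype.card_pos

theorem pos_peak (P : Pref A) : pos P (peak P) = 0 := pos_rk P card_pos'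

theorem eq_peak {P : Pref A} {a : A} (h : pos P a = 0) : a = peak P :=
  pos_inj (h.trans (pos_peak P).symm)

theorem rev_pos {P P' : Pref A} (h : Reversed P P') (a : A) :
    pos P a + pos P' a + 1 = Fintype.card A := by
  let e : Fin (Fintype.card A) ≃o Fin (Fintype.card A) :=
    { toEquiv := (P.trans P'.symm).trans Fin.revPerm
      map_rel_iff' := by
        intro i j
        have := h (P j) (P i)
        simp only [prefers, Equiv.symm_apply_apply] at this
        simp only [Equiv.trans_apply, Fin.revPerm_apply, Fin.rev_le_rev]
        rw [← not_lt, ← not_lt, this] }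
  have he : e = OrderIso.refl _ := Subsingleton.elim _ _
  have h2 : e (P.symm a) = P.symm a := by rw [he]; rfl
  have h3 : Fin.rev (P'.symm a) = P.symm a := by
    simpa [e] using h2
  have h4 := congrArg Fin.val h3
  simp only [Fin.val_rev] at h4
  have := pos_lt P' a
  unfold pos at *
  omega

theorem rev_symm {P P' : Pref A} (h : Reversed P P') : Reversed P' P :=
  fun a b => (h b a).symm

theorem adj_prefs {D : Set (Pref A)} (hc : 3 ≤ Fintype.card A) {x y : A}
    (h : (adjGraph D).Adj x y) :
    ∃ P ∈ D, ∃ P' ∈ D, peak P = x ∧ peak P' = y ∧ pos P x = 0 ∧ pos P y = 1 ∧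
      pos P' y = 0 ∧ pos P' x = 1 ∧ ∀ c, c ≠ x → c ≠ y → pos P c = pos P' c := by
  have key : ∀ x y, DomAdjacent D x y → ∃ P ∈ D, ∃ P' ∈ D, peak P = x ∧ peak P' = y ∧
      pos P x = 0 ∧ pos P y = 1 ∧
      pos P' y = 0 ∧ pos P' x = 1 ∧ ∀ c, c ≠ x → c ≠ y → pos P c = pos P' c := by
    rintro x y ⟨P, hP, P', hP', h1, h2, h3, h4, h5⟩
    have q1 : pos P x = 0 := by rw [← h1]; exact pos_peak P
    have q2 : pos P y = 1 := by rw [← h2]; exact pos_rk P (by omega)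
    have q3 : pos P' y = 0 := by rw [← h3]; exact pos_peak P'
    have q4 : pos P' x = 1 := by rw [← h4]; exact pos_rk P' (by omega)
    refine ⟨P, hP, P', hP', h1, h3, q1, q2, q3, q4, ?_⟩
    intro c hx hy
    have a0 : pos P c ≠ 0 := fun e => hx (pos_inj (e.trans q1.symm))
    have a1 : pos P c ≠ 1 := fun e => hy (pos_inj (e.trans q2.symm))
    have := h5 (pos P c) (by omega)
    rw [rk_pos] at this
    conv_rhs => rw [this]
    exact (pos_rk P' (pos_lt P c)).symm
  rw [adjGraph, SimpleGraph.fromRel_adj] at h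
  rcases h.2 with h | h
  · exact key x y h
  · obtain ⟨P, hP, P', hP', h1, h2, h3, h4, h5, h6, h7⟩ := key y x h
    exact ⟨P', hP', P, hP, h2, h1, h5, h6, h3, h4, fun c a b => (h7 c b a).symm⟩

theorem minRich {D : Set (Pref A)} (hc : 3 ≤ Fintype.card A)
    (hG : (adjGraph D).Connected) (a : A) : ∃ P ∈ D, peak P = a := by
  have : Nontrivial A := Fintype.one_lt_card_iff_nontrivial.mp (by omega)
  obtain ⟨b, hb⟩ := hG.preconnected.exists_adj_of_nontrivial a
  obtain ⟨P, hP, _, _, h, _⟩ := adj_prefs hc hb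
  exact ⟨P, hP, h⟩

/-- Own-peak strategy-proofness of a one-variable tops function. -/
def SPv (D : Set (Pref A)) (v : A → A) : Prop :=
  ∀ P ∈ D, ∀ b, pos P (v (peak P)) ≤ pos P (v b)

theorem SPv.local {D : Set (Pref A)} (hc : 3 ≤ Fintype.card A) {v : A → A} (hv : SPv D v)
    {x y : A} (h : (adjGraph D).Adj x y) : v x = v y ∨ (v x = x ∧ v y = y) := by
  obtain ⟨P, hP, P', hP', h1, h2, h3, h4, h5, h6, h7⟩ := adj_prefs hc h
  have a1 := hv P hP y
  have a2 := hv P' hP' x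
  rw [h1] at a1
  rw [h2] at a2
  have hi : ∀ a b, pos P a = pos P b → a = b := fun a b => pos_inj
  have hi' : ∀ a b, pos P' a = pos P' b → a = b := fun a b => pos_inj
  have hne := h.ne
  generalize v x = s at *
  generalize v y = t at *
  by_cases s1 : s = x
  · by_cases t1 : t = y
    · exact Or.inr ⟨s1, t1⟩
    · left
      by_contra hst
      have : pos P' t ≤ 1 := by rw [← h6, ← s1]; exact a2
      have b0 : pos P' t ≠ 0 := fun e => t1 (hi' _ _ (e.trans h5.symm))
      have b1 : pos P' t ≠ 1 := fun e => hst (s1.trans (hi' _ _ (e.trans h6.symm)).symm)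
      omega
  · left
    by_cases s2 : s = y
    · have : pos P t ≥ 1 := by rw [← h4, ← s2]; exact a1
      by_cases t1 : t = y
      · rw [s2, t1]
      · have : pos P' t ≤ 0 := by rw [← h5, ← s2]; exact a2
        exact absurd (hi' _ _ ((Nat.le_zero.mp this).trans h5.symm)) t1
    · have e := h7 s s1 s2
      by_cases t1 : t = x
      · exfalso
        rw [t1, h3] at a1
        exact s1 (hi _ _ ((Nat.le_zero.mp a1).trans h3.symm))
      by_cases t2 : t = y
      · exfalso
        rw [t2, h4] at a1
        have b0 : pos P s ≠ 0 := fun e => s1 (hi _ _ (e.trans h3.symm))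
        have b1 : pos P s ≠ 1 := fun e => s2 (hi _ _ (e.trans h4.symm))
        omega
      · have e2 := h7 t t1 t2
        apply hi
        omega

/-- Adjacency inside a set. -/
def AdjIn (D : Set (Pref A)) (S : Set A) (u v : A) : Prop :=
  (adjGraph D).Adj u v ∧ u ∈ S ∧ v ∈ S

/-- Reachability inside a set. -/
def RA (D : Set (Pref A)) (S : Set A) : A → A → Prop := Relation.ReflTransGen (AdjIn D S)

theorem RA.symm {D : Set (Pref A)} {S : Set A} {x y : A} (h : RA D S x y) : RA D S y x := by
  induction h with
  | refl => exact Relation.ReflTransGen.refl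
  | tail _ h ih => exact Relation.ReflTransGen.head ⟨h.1.symm, h.2.2, h.2.1⟩ ih

theorem RA.retract {D : Set (Pref A)} {S T : Set A} (t : A → A) {x y : A} (h : RA D S x y)
    (ht : ∀ u v, AdjIn D S u v → t u = t v ∨ AdjIn D T (t u) (t v)) : RA D T (t x) (t y) := by
  induction h with
  | refl => exact Relation.ReflTransGen.refl
  | tail _ h ih =>
    rcases ht _ _ h with e | e
    · rw [← e]; exact ih
    · exact Relation.ReflTransGen.tail ih e

theorem RA.univ {D : Set (Pref A)} (hG : (adjGraph D).Connected) (x y : A) :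
    RA D Set.univ x y := by
  have := (SimpleGraph.reachable_iff_reflTransGen x y).mp (hG.preconnected x y)
  induction this with
  | refl => exact Relation.ReflTransGen.refl
  | tail _ h ih => exact Relation.ReflTransGen.tail ih ⟨h, trivial, trivial⟩

theorem SPv.stay {D : Set (Pref A)} (hc : 3 ≤ Fintype.card A) {v : A → A} (hv : SPv D v)
    {S : Set A} {x y c : A} (h : RA D S x y) (hcS : c ∉ S) (hx : v x = c) : v y = c := by
  induction h with
  | refl => exact hx
  | tail _ h ih =>
    rcases hv.local hc h.1 with e | ⟨e, _⟩
    · rw [← e]; exact ih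
    · exact absurd h.2.1 (by rw [← e, ih]; exact hcS)

theorem SPv.range {D : Set (Pref A)} (hc : 3 ≤ Fintype.card A) {v : A → A} (hv : SPv D v)
    {S : Set A} {x y : A} (h : RA D S x y) (hx : v x ∈ S) : v y ∈ S := by
  induction h with
  | refl => exact hx
  | tail _ h ih =>
    rcases hv.local hc h.1 with e | ⟨_, e⟩
    · rw [← e]; exact ih
    · rw [e]; exact h.2.2

/-- A two-voter tops function which is strategy-proof, and unanimous on `Z`. -/
structure Rule2 (D : Set (Pref A)) (Z : Set A) (F : A → A → A) : Prop where
  sp1 : ∀ y, SPv D (fun x => F x y)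
  sp2 : ∀ x, SPv D (fun y => F x y)
  un : ∀ x ∈ Z, F x x = x

theorem Rule2.swap {D : Set (Pref A)} {Z : Set A} {F : A → A → A} (h : Rule2 D Z F) :
    Rule2 D Z (fun x y => F y x) := ⟨h.sp2, h.sp1, h.un⟩

theorem Rule2.edge {D : Set (Pref A)} (hc : 3 ≤ Fintype.card A) {Z : Set A} {F : A → A → A}
    (h : Rule2 D Z F) {x y : A} (hxy : AdjIn D Z x y) : F x y = x ∨ F x y = y := by
  rcases (h.sp1 y).local hc hxy.1 with e | ⟨e, _⟩
  · right; exact e.trans (h.un y hxy.2.2)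
  · exact Or.inl e

theorem Rule2.forward {D : Set (Pref A)} (hc : 3 ≤ Fintype.card A) {Z : Set A} {F : A → A → A}
    (h : Rule2 D Z F) {x y z : A} (hxy : AdjIn D Z x y) (hyz : AdjIn D Z y z) (hxz : x ≠ z)
    (hF : F x y = x) : F y z = y := by
  have h1 : F x z = x := by
    rcases (h.sp2 x).local hc hyz.1 with e | ⟨e, _⟩
    · exact e.symm.trans hF
    · exact absurd (hF.symm.trans e) hxy.1.ne
  rcases (h.sp1 z).local hc hxy.1 with e | ⟨_, e⟩
  · have e' : F y z = x := e.symm.trans h1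
    rcases h.edge hc hyz with e2 | e2
    · exact e2
    · exact absurd (e'.symm.trans e2) hxz
  · exact e

theorem Rule2.leaf {D : Set (Pref A)} (hc : 3 ≤ Fintype.card A) {Z : Set A} {F : A → A → A}
    (h : Rule2 D Z F) (N : ℕ) : ∀ x y, Set.ncard {z | RA D (Z \ {y}) x z} = N →
    AdjIn D Z x y → F x y = y → F y x = y →
    ∃ w v, AdjIn D Z w v ∧ F w v = v ∧ F v w = v ∧ ∀ u, AdjIn D Z w u → u = v := by
  induction N using Nat.strong_induction_on with
  | _ N ih =>
    intro x y hN hxy h1 h2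
    by_cases hl : ∀ u, AdjIn D Z x u → u = y
    · exact ⟨x, y, hxy, h1, h2, hl⟩
    push Not at hl
    obtain ⟨u, hu, huy⟩ := hl
    have hyx : AdjIn D Z y x := ⟨hxy.1.symm, hxy.2.2, hxy.2.1⟩
    have hux : AdjIn D Z u x := ⟨hu.1.symm, hu.2.2, hu.2.1⟩
    have a1 : F x u = x := h.forward hc hyx hu huy.symm h2
    have a2 : F u x = x := h.swap.forward hc hyx hu huy.symm h1
    have hny : ¬ RA D (Z \ {x}) u y := by
      intro hr
      have := (h.sp1 x).stay hc hr (c := x) (by simp) a2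
      exact hxy.1.ne (this.symm.trans h2)
    have hsub : ∀ z, RA D (Z \ {x}) u z → RA D (Z \ {y}) x z := by
      intro z hz
      have hstart : RA D (Z \ {y}) x u :=
        Relation.ReflTransGen.single
          ⟨hu.1, ⟨hu.2.1, fun e => hxy.1.ne e⟩, ⟨hu.2.2, fun e => huy e⟩⟩
      induction hz with
      | refl => exact hstart
      | @tail b c hb hbc ih =>
        refine Relation.ReflTransGen.tail ih ⟨hbc.1, ⟨hbc.2.1.1, ?_⟩, ⟨hbc.2.2.1, ?_⟩⟩
        · intro e
          rw [Set.mem_singleton_iff] at e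
          exact hny (e ▸ hb)
        · intro e
          rw [Set.mem_singleton_iff] at e
          exact hny (e ▸ Relation.ReflTransGen.tail hb hbc)
    refine ih _ ?_ u x rfl hux a2 a1
    rw [← hN]
    apply Set.ncard_lt_ncard _ (Set.toFinite _)
    refine ⟨fun z hz => hsub z hz, fun hh => ?_⟩
    have hx : RA D (Z \ {x}) u x := hh (show RA D (Z \ {y}) x x from Relation.ReflTransGen.refl)
    rcases Relation.ReflTransGen.cases_tail hx with e | ⟨c, _, hc'⟩
    · exact hu.1.ne e
    · exact hc'.2.2.2 rfl

theorem Rule2.dict {D : Set (Pref A)} (hc : 3 ≤ Fintype.card A) {Z : Set A} {F : A → A → A}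
    (h : Rule2 D Z F) (hZ : ∀ x ∈ Z, ∀ y ∈ Z, RA D Z x y)
    (hC : ∀ x y, AdjIn D Z x y → F x y = y → F y x = y → False) :
    (∀ x ∈ Z, ∀ y ∈ Z, F x y = x) ∨ (∀ x ∈ Z, ∀ y ∈ Z, F x y = y) := by
  have fin : ∀ F : A → A → A, Rule2 D Z F → (∀ x y, AdjIn D Z x y → F x y = x) →
      ∀ x ∈ Z, ∀ y ∈ Z, F x y = x := by
    intro F h hN x hx y hy
    have hr := hZ x hx y hy
    clear hy
    induction hr with
    | refl => exact h.un x hx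
    | @tail b c _ hbc ih =>
      rcases (h.sp2 x).local hc hbc.1 with e | ⟨e, _⟩
      · exact e.symm.trans ih
      · have : x = b := ih.symm.trans e
        subst this
        exact hN _ _ hbc
  have flip : ∀ x y, AdjIn D Z x y → AdjIn D Z y x := fun x y q => ⟨q.1.symm, q.2.2, q.2.1⟩
  by_cases hex : ∃ x y, AdjIn D Z x y ∧ F x y = x
  · left
    obtain ⟨x0, y0, h0, hF0⟩ := hex
    have nc : ∀ x y, AdjIn D Z x y → F x y = x → F y x = y := by
      intro x y q e
      rcases h.edge hc (flip _ _ q) with e2 | e2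
      · exact e2
      · exact (hC y x (flip _ _ q) e2 e).elim
    have base : ∀ u, AdjIn D Z x0 u → F x0 u = x0 := by
      intro u hu
      by_cases e : u = y0
      · rw [e]; exact hF0
      · exact h.forward hc (flip _ _ h0) hu (Ne.symm e) (nc _ _ h0 hF0)
    refine fin F h ?_
    intro x y hxy
    have hr := hZ x0 h0.2.1 x hxy.2.1
    have : ∀ u, AdjIn D Z x u → F x u = x := by
      clear hxy
      induction hr with
      | refl => exact base
      | @tail b c _ hbc ih =>
        intro u hu
        by_cases e : b = u
        · subst e
          exact nc _ _ hbc (ih _ hbc)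
        · exact h.forward hc hbc hu e (ih _ hbc)
    exact this y hxy
  · right
    push Not at hex
    intro x hx y hy
    refine fin (fun x y => F y x) h.swap ?_ y hy x hx
    intro a b hab
    rcases h.edge hc (flip _ _ hab) with e | e
    · exact absurd e (hex _ _ (flip _ _ hab))
    · exact e

end TOH

namespace TOH

theorem lemB_aux {D : Set (Pref A)} (hc : 3 ≤ Fintype.card A) {Z S : Set A} {F : A → A → A}
    (h : Rule2 D Z F) {w v : A} (hvZ : v ∈ Z) (hvS : v ∉ S) (hwS : w ∈ S)
    (hadj : (adjGraph D).Adj w v) (e1 : F w v = v)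
    (hS : ∀ x ∈ S, RA D S w x) {u : A} (huZ : u ∈ Z) (hu : RA D (Z \ S) v u)
    {P : Pref A} (hP : P ∈ D) (hpk : peak P ∈ S) (hbest : ∀ z, z ∉ S → pos P u ≤ pos P z) :
    F v u = u := by
  have r1 : F w u ∈ Z \ S := (h.sp2 w).range hc hu (by rw [e1]; exact ⟨hvZ, hvS⟩)
  have r2 : F w u = F v u := by
    rcases (h.sp1 u).local hc hadj with e | ⟨e, _⟩
    · exact e
    · exact absurd hwS (by rw [← e]; exact r1.2)
  have r3 : F (peak P) u = F w u := (h.sp1 u).stay hc (hS _ hpk) r1.2 rfl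
  have r4 := h.sp1 u P hP u
  simp only [h.un u huZ] at r4
  rw [r3, r2] at r4
  rw [r2] at r1
  exact pos_inj (le_antisymm r4 (hbest _ r1.2))

theorem lemB {D : Set (Pref A)} (hc : 3 ≤ Fintype.card A) {Z S : Set A} {F : A → A → A}
    (h : Rule2 D Z F) {w v : A} (hvZ : v ∈ Z) (hvS : v ∉ S) (hwS : w ∈ S)
    (hadj : (adjGraph D).Adj w v) (e1 : F w v = v) (e2 : F v w = v)
    (hS : ∀ x ∈ S, RA D S w x) (hZS : ∀ u ∈ Z, u ∉ S → RA D (Z \ S) v u)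
    (hz : ∀ P ∈ D, peak P ∈ S → ∀ z, z ∉ S → z ∉ Z → ∃ z' ∈ Z, z' ∉ S ∧ pos P z' < pos P z) :
    ∀ P ∈ D, peak P ∈ S → ∀ z, z ∉ S → pos P v ≤ pos P z := by
  intro P hP hpk
  obtain ⟨u, huS, hbest⟩ := (Set.toFinite Sᶜ).exists_minimalFor (pos P) _ ⟨v, hvS⟩
  have hbest' : ∀ z, z ∉ S → pos P u ≤ pos P z := by
    intro z hz
    rcases le_total (pos P u) (pos P z) with q | q
    · exact q
    · exact hbest hz q
  have huZ : u ∈ Z := by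
    by_contra hh
    obtain ⟨z', _, q1, q2⟩ := hz P hP hpk u huS hh
    have := hbest' z' q1
    omega
  have f1 := lemB_aux hc h hvZ hvS hwS hadj e1 hS huZ (hZS u huZ huS) hP hpk hbest'
  have f2 := lemB_aux hc h.swap hvZ hvS hwS hadj e2 hS huZ (hZS u huZ huS) hP hpk hbest'
  have f3 : F (peak P) v = v := (h.sp1 v).stay hc (hS _ hpk) hvS e1
  have f4 := h.sp1 v P hP u
  simp only [f2, f3] at f4
  intro z hz
  exact f4.trans (hbest' z hz)

/-- The PNT-type rule. -/
noncomputable def pnt (S : Set A) (g : A → ℕ) (v w : A) (P : Fin 2 → Pref A) : A :=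
  if peak (P 0) ∈ S then
    (if peak (P 1) ∈ S then (if g (peak (P 0)) ≤ g (peak (P 1)) then peak (P 1) else peak (P 0))
     else (if pos (P 1) v < pos (P 1) w then v else w))
  else peak (P 0)

theorem lemPNT {D : Set (Pref A)} (hc : 3 ≤ Fintype.card A) (htod : TopsOnlyDomain D)
    (hG : (adjGraph D).Connected)
    {S : Set A} (g : A → ℕ) {w v : A} (hwS : w ∈ S) (hvS : v ∉ S)
    (h1 : ∀ P ∈ D, peak P ∈ S → ∀ z, z ∉ S → pos P v ≤ pos P z)
    (h2 : ∀ P ∈ D, peak P ∉ S → ∀ z ∈ S, pos P w ≤ pos P z)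
    (h3 : ∀ P ∈ D, peak P ∈ S → ∀ y ∈ S, ∀ z ∈ S, g (peak P) ≤ g y → g y ≤ g z →
      pos P y ≤ pos P z)
    (h3' : ∀ P ∈ D, peak P ∈ S → pos P w < pos P v)
    (h3'' : ∀ y ∈ S, g y ≤ g w)
    (hR : ∀ u, u ∉ S → RA D Sᶜ v u) :
    ∀ P ∈ D, peak P ∉ S → pos P v < pos P w := by
  have hvw : v ≠ w := fun e => hvS (e ▸ hwS)
  have un : IsRule D (pnt S g v w) := by
    intro P hP a ha
    unfold pnt
    simp only [ha]
    split_ifs <;> rfl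
  have pk0 : ∀ (P : Pref A) z, pos P (peak P) ≤ pos P z := by
    intro P z; rw [pos_peak]; exact Nat.zero_le _
  have sp : StrategyProof D (pnt S g v w) := by
    intro P hP i Q hQ
    suffices hh : pos (P i) (pnt S g v w P) ≤ pos (P i) (pnt S g v w (Function.update P i Q)) by
      rcases hh.lt_or_eq with q | q
      · exact Or.inr q
      · exact Or.inl (pos_inj q)
    have hP0 := hP 0
    have hP1 := hP 1
    have key : ∀ R ∈ D, peak R ∈ S → ∀ y ∈ S, g (peak R) ≤ g y → ∀ z, z ∉ S →
        pos R y ≤ pos R z := by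
      intro R hR hpk y hy hg z hz
      have a1 := h3 R hR hpk y hy w hwS hg (h3'' y hy)
      have a2 := h3' R hR hpk
      have a3 := h1 R hR hpk z hz
      omega
    fin_cases i
    · simp only [pnt, Fin.zero_eta, Function.update_self, Fin.isValue, ne_eq, one_ne_zero,
        not_false_eq_true, Function.update_of_ne]
      by_cases x0 : peak (P 0) ∈ S
      · by_cases x1 : peak (P 1) ∈ S
        · simp only [x0, x1, if_true]
          by_cases y0 : peak Q ∈ S
          · simp only [y0, if_true]
            by_cases l : g (peak (P 0)) ≤ g (peak (P 1))
            · rw [if_pos l]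
              split_ifs with l2
              · exact le_rfl
              · exact h3 _ hP0 x0 _ x1 _ y0 l (by omega)
            · rw [if_neg l]; exact pk0 _ _
          · simp only [y0, if_false]
            split_ifs with l
            · exact key _ hP0 x0 _ x1 l _ y0
            · exact pk0 _ _
        · simp only [x0, x1, if_true, if_false]
          by_cases y0 : peak Q ∈ S
          · simp only [y0, if_true]; exact le_rfl
          · simp only [y0, if_false]
            split_ifs
            · exact h1 _ hP0 x0 _ y0
            · exact key _ hP0 x0 _ hwS (h3'' _ x0) _ y0
      · simp only [x0, if_false]; exact pk0 _ _
    · simp only [pnt, Fin.mk_one, Function.update_self, Fin.isValue, ne_eq, zero_ne_one,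
        not_false_eq_true, Function.update_of_ne]
      by_cases x0 : peak (P 0) ∈ S
      · simp only [x0, if_true]
        by_cases x1 : peak (P 1) ∈ S
        · simp only [x1, if_true]
          by_cases l : g (peak (P 0)) ≤ g (peak (P 1))
          · rw [if_pos l]; exact pk0 _ _
          · rw [if_neg l]
            by_cases y1 : peak Q ∈ S
            · simp only [y1, if_true]
              split_ifs with l2
              · exact h3 _ hP1 x1 _ x0 _ y1 (by omega) l2
              · exact le_rfl
            · simp only [y1, if_false]
              split_ifs
              · exact key _ hP1 x1 _ x0 (by omega) _ hvS
              · exact h3 _ hP1 x1 _ x0 _ hwS (by omega) (h3'' _ x0)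
        · simp only [x1, if_false]
          have aw := h2 _ hP1 x1
          by_cases y1 : peak Q ∈ S
          · simp only [y1, if_true]
            split_ifs with l1 l2 l2
            · exact l1.le.trans (aw _ y1)
            · exact l1.le.trans (aw _ x0)
            · exact aw _ y1
            · exact aw _ x0
          · simp only [y1, if_false]
            split_ifs <;> omega
      · simp only [x0, if_false]; exact le_rfl
  have hto := htod 2 le_rfl _ un sp
  obtain ⟨P0, hP0, hpk0⟩ := minRich hc hG w
  have const : ∀ P ∈ D, ∀ P' ∈ D, peak P = peak P' → peak P ∉ S → pos P v < pos P w →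
      pos P' v < pos P' w := by
    intro P hP P' hP' e hS hlt
    have := hto ![P0, P] ![P0, P'] (by intro i; fin_cases i <;> simp [hP0, hP])
      (by intro i; fin_cases i <;> simp [hP0, hP']) (by intro i; fin_cases i <;> simp [e])
    by_contra hh
    have e0 : peak P0 ∈ S := hpk0 ▸ hwS
    have e1 : pnt S g v w ![P0, P] = v := by
      unfold pnt
      exact (if_pos e0).trans ((if_neg hS).trans (if_pos hlt))
    have e2 : pnt S g v w ![P0, P'] = w := by
      unfold pnt
      exact (if_pos e0).trans ((if_neg (e ▸ hS)).trans (if_neg hh))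
    exact hvw (e1.symm.trans (this.trans e2))
  have prop : ∀ u, RA D Sᶜ v u → u ∉ S → ∀ P ∈ D, peak P = u → pos P v < pos P w := by
    intro u hu
    induction hu with
    | refl =>
      intro _ P hP e
      have : pos P v = 0 := by rw [← e]; exact pos_peak P
      have h0 : pos P w ≠ 0 := fun q => hvw (pos_inj (this.trans q.symm))
      omega
    | @tail b c _ hbc ih =>
      intro hcS P hP e
      have ih := ih hbc.2.1
      obtain ⟨Q, hQ, Q', hQ', q1, q2, q3, q4, q5, q6, q7⟩ := adj_prefs hc hbc.1
      have wb : w ≠ b := fun e => hbc.2.1 (e ▸ hwS)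
      have wc : w ≠ c := fun e => hbc.2.2 (e ▸ hwS)
      have d1 := ih Q hQ q1
      have d2 := q7 w wb wc
      refine const Q' hQ' P hP (q2.trans e.symm) (q2 ▸ hcS) ?_
      have n0 : pos Q w ≠ 0 := fun q => wb (pos_inj (q.trans q3.symm))
      have n1 : pos Q w ≠ 1 := fun q => wc (pos_inj (q.trans q4.symm))
      by_cases vb : v = b
      · rw [vb, q6]; omega
      by_cases vc : v = c
      · rw [vc, q5]; omega
      · rw [← q7 v vb vc]; omega
  intro P hP hpk
  exact prop _ (hR _ hpk) hpk P hP rfl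

end TOH

namespace TOH

/-- The step condition. -/
def St (D : Set (Pref A)) (Pl : Pref A) (k : ℕ) : Prop :=
  ∀ P ∈ D, (k < pos Pl (peak P) → pos P (rk Pl (k + 1)) < pos P (rk Pl k)) ∧
    (pos Pl (peak P) ≤ k → ∀ j, k + 1 < j → j < Fintype.card A →
      pos P (rk Pl (k + 1)) < pos P (rk Pl j))

theorem pos_lt_of_peak {P : Pref A} {x y : A} (hx : x = peak P) (hy : y ≠ x) :
    pos P x < pos P y := by
  have h0 : pos P x = 0 := by rw [hx]; exact pos_peak P
  have h1 : pos P y ≠ 0 := fun e => hy (pos_inj (e.trans h0.symm))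
  omega

theorem F1 {D : Set (Pref A)} {Pl : Pref A} {p : ℕ} (hL : ∀ k < p, St D Pl k)
    {P : Pref A} (hP : P ∈ D) {x y : A} (h1 : pos Pl x < pos Pl y) (h2 : pos Pl y ≤ p)
    (h3 : pos Pl y ≤ pos Pl (peak P)) : pos P y < pos P x := by
  have hm := pos_lt Pl y
  have key : ∀ d i, i + d + 1 ≤ p → i + d + 1 ≤ pos Pl (peak P) →
      pos P (rk Pl (i + d + 1)) < pos P (rk Pl i) := by
    intro d
    induction d with
    | zero => intro i a b; exact (hL i (by omega) P hP).1 (by omega)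
    | succ d ih =>
      intro i a b
      have := (hL (i + d + 1) (by omega) P hP).1 (by omega)
      have := ih i (by omega) (by omega)
      have e : i + (d + 1) + 1 = i + d + 1 + 1 := by omega
      rw [e]; omega
  have := key (pos Pl y - pos Pl x - 1) (pos Pl x) (by omega) (by omega)
  have e : pos Pl x + (pos Pl y - pos Pl x - 1) + 1 = pos Pl y := by omega
  rwa [e, rk_pos, rk_pos] at this

theorem F2 {D : Set (Pref A)} {Pl : Pref A} {p : ℕ} (hL : ∀ k < p, St D Pl k)
    {P : Pref A} (hP : P ∈ D) {x y : A} (h1 : pos Pl x < pos Pl y) (h2 : pos Pl x ≤ p)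
    (h3 : pos Pl (peak P) ≤ pos Pl x) : pos P x < pos P y := by
  by_cases hx : x = peak P
  · exact pos_lt_of_peak hx (fun e => by rw [e] at h1; omega)
  · have : pos Pl (peak P) ≠ pos Pl x := fun e => hx (pos_inj e).symm
    have h4 := (hL (pos Pl x - 1) (by omega) P hP).2 (by omega) (pos Pl y) (by omega) (pos_lt _ _)
    have e : pos Pl x - 1 + 1 = pos Pl x := by omega
    rwa [e, rk_pos, rk_pos] at h4

/-- The working context. -/
structure Ctx (D : Set (Pref A)) (Pl Pu : Pref A) (p q : ℕ) : Prop where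
  hc : 3 ≤ Fintype.card A
  hG : (adjGraph D).Connected
  hPl : Pl ∈ D
  hPu : Pu ∈ D
  rev : ∀ a, pos Pl a + pos Pu a + 1 = Fintype.card A
  L : ∀ k < p, St D Pl k
  R : ∀ k < q, St D Pu k
  hpq : p + q + 3 ≤ Fintype.card A

/-- The free zone. -/
def Zs (Pl Pu : Pref A) (p q : ℕ) : Set A := {a | p ≤ pos Pl a ∧ q ≤ pos Pu a}

theorem Zs_swap (Pl Pu : Pref A) (p q : ℕ) : Zs Pl Pu p q = Zs Pu Pl q p := by
  ext a; exact and_comm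

variable {D : Set (Pref A)} {Pl Pu : Pref A} {p q : ℕ}

theorem Ctx.swap (c : Ctx D Pl Pu p q) : Ctx D Pu Pl q p :=
  ⟨c.hc, c.hG, c.hPu, c.hPl, fun a => by have := c.rev a; omega, c.R, c.L,
    by have := c.hpq; omega⟩

theorem Ctx.jump (c : Ctx D Pl Pu p q) {x y : A} (h : (adjGraph D).Adj x y)
    (hx : pos Pl x < p) (hxy : pos Pl x < pos Pl y) : pos Pl y = pos Pl x + 1 := by
  obtain ⟨P, hP, P', hP', h1, h2, h3, h4, h5, h6, h7⟩ := adj_prefs c.hc h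
  by_contra hne
  have := (c.L _ hx P hP).2 (by rw [h1]) (pos Pl y) (by omega) (pos_lt _ _)
  rw [rk_pos, h4] at this
  have e : rk Pl (pos Pl x + 1) = x := pos_inj (P := P) (by omega)
  have e2 := congrArg (pos Pl) e
  rw [pos_rk Pl (by have := pos_lt Pl y; omega)] at e2
  omega

/-- An edge from outside the zone on the left enters at `a_p`. -/
theorem Ctx.enter (c : Ctx D Pl Pu p q) {x y : A} (h : (adjGraph D).Adj x y)
    (hx : pos Pl x < p) (hy : p ≤ pos Pl y) : pos Pl y = p := by
  have := c.jump h hx (by omega); omega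

theorem RA.leaf {Y : Set A} {w v u : A} (hleaf : ∀ u, AdjIn D Y w u → u = v) (hvw : v ≠ w)
    (h : RA D Y v u) (hu : u ≠ w) : RA D (Y \ {w}) v u := by
  have := h.retract (T := Y \ {w}) (fun a => if a = w then v else a) (by
    intro a b hab
    by_cases ha : a = w
    · subst ha
      left
      have := hleaf b hab
      subst this
      simp [hvw]
    · by_cases hb : b = w
      · subst hb
        left
        have := hleaf a ⟨hab.1.symm, hab.2.2, hab.2.1⟩
        subst this
        simp [hvw]
      · right
        simp only [ha, hb, if_false]
        exact ⟨hab.1, ⟨hab.2.1, ha⟩, ⟨hab.2.2, hb⟩⟩)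
  simpa [hvw, hu] using this

theorem Ctx.Zconn (c : Ctx D Pl Pu p q) : ∀ x ∈ Zs Pl Pu p q, ∀ y ∈ Zs Pl Pu p q,
    RA D (Zs Pl Pu p q) x y := by
  intro x hx y hy
  have hpq := c.hpq
  let t : A → A := fun u => if pos Pl u < p then rk Pl p else if pos Pu u < q then rk Pu q else u
  have tl : ∀ u, pos Pl u < p → t u = rk Pl p := fun u h => by simp [t, h]
  have tu : ∀ u, pos Pu u < q → t u = rk Pu q := fun u h => by
    have := c.rev u
    simp only [t]; rw [if_neg (by omega), if_pos h]
  have tz : ∀ u, u ∈ Zs Pl Pu p q → t u = u := fun u h => by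
    simp only [t]; rw [if_neg (not_lt.mpr h.1), if_neg (not_lt.mpr h.2)]
  have ed : ∀ u v, (adjGraph D).Adj u v → pos Pl u < p → p ≤ pos Pl v → t u = t v := by
    intro u v h hu hv
    have e := c.enter h hu hv
    have r := c.rev v
    rw [tl u hu, tz v ⟨by omega, by omega⟩, ← e, rk_pos]
  have ed' : ∀ u v, (adjGraph D).Adj u v → pos Pu u < q → q ≤ pos Pu v → t u = t v := by
    intro u v h hu hv
    have e := c.swap.enter h hu hv
    have r := c.rev v
    rw [tu u hu, tz v ⟨by omega, by omega⟩, ← e, rk_pos]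
  have := (RA.univ c.hG x y).retract (T := Zs Pl Pu p q) t (by
    intro u v ⟨h, _, _⟩
    by_cases u1 : pos Pl u < p
    · by_cases v1 : pos Pl v < p
      · left; rw [tl u u1, tl v v1]
      · left; exact ed u v h u1 (by omega)
    by_cases v1 : pos Pl v < p
    · left; exact (ed v u h.symm v1 (by omega)).symm
    by_cases u2 : pos Pu u < q
    · by_cases v2 : pos Pu v < q
      · left; rw [tu u u2, tu v v2]
      · left; exact ed' u v h u2 (by omega)
    by_cases v2 : pos Pu v < q
    · left; exact (ed' v u h.symm v2 (by omega)).symm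
    have a : u ∈ Zs Pl Pu p q := ⟨by omega, by omega⟩
    have b : v ∈ Zs Pl Pu p q := ⟨by omega, by omega⟩
    right; rw [tz u a, tz v b]; exact ⟨h, a, b⟩)
  rwa [tz x hx, tz y hy] at this

theorem Ctx.interior (c : Ctx D Pl Pu p q) (htod : TopsOnlyDomain D) {F : A → A → A}
    (h : Rule2 D (Zs Pl Pu p q) F) {w v : A} (hwv : AdjIn D (Zs Pl Pu p q) w v)
    (e1 : F w v = v) (e2 : F v w = v)
    (hleaf : ∀ u, AdjIn D (Zs Pl Pu p q) w u → u = v)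
    (hw1 : p < pos Pl w) (hw2 : q < pos Pu w) : False := by
  have hvw : v ≠ w := hwv.1.ne'
  have hpq := c.hpq
  have nbZ : ∀ u, (adjGraph D).Adj w u → u = v := by
    intro u hu
    refine hleaf u ⟨hu, hwv.2.1, ?_, ?_⟩
    · by_contra hh
      have := c.enter hu.symm (by omega) hw1.le
      omega
    · by_contra hh
      have := c.swap.enter hu.symm (by omega) hw2.le
      omega
  have b1 := lemB c.hc h (S := {w}) hwv.2.2 hvw rfl hwv.1 e1 e2
    (by rintro x rfl; exact Relation.ReflTransGen.refl)
    (by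
      intro u hu huw
      exact RA.leaf hleaf hvw (c.Zconn _ hwv.2.2 _ hu) huw)
    (by
      intro P hP hpk z hz hzZ
      rw [Set.mem_singleton_iff] at hpk
      by_cases hz1 : pos Pl z < p
      · have e : pos Pl (rk Pl p) = p := pos_rk _ (by omega)
        have r := c.rev (rk Pl p)
        refine ⟨rk Pl p, ⟨by omega, by omega⟩, ?_, ?_⟩
        · intro e'; rw [Set.mem_singleton_iff] at e'; rw [e'] at e; omega
        · exact F1 c.L hP (by omega) (by omega) (by rw [hpk]; omega)
      · have hz2 : pos Pu z < q := by
          by_contra hh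
          exact hzZ ⟨by omega, by omega⟩
        have e : pos Pu (rk Pu q) = q := pos_rk _ (by omega)
        have r := c.rev (rk Pu q)
        refine ⟨rk Pu q, ⟨by omega, by omega⟩, ?_, ?_⟩
        · intro e'; rw [Set.mem_singleton_iff] at e'; rw [e'] at e; omega
        · exact F1 c.R hP (by omega) (by omega) (by rw [hpk]; omega))
  have b2 := lemPNT c.hc htod c.hG (S := {w}) (fun _ => 0) (w := w) (v := v) rfl hvw b1
    (by rintro P hP _ z rfl; exact le_rfl)
    (by rintro P hP _ y rfl z rfl _ _; exact le_rfl)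
    (by intro P hP hpk; exact pos_lt_of_peak (Set.mem_singleton_iff.mp hpk).symm hvw)
    (by intro y _; exact le_rfl)
    (by
      intro u hu
      have := RA.leaf (Y := Set.univ) (w := w) (fun u hu => nbZ u hu.1) hvw (RA.univ c.hG v u) hu
      rwa [← Set.compl_eq_univ_sdiff] at this)
  have p1 := b2 Pl c.hPl (by
    intro e; rw [Set.mem_singleton_iff] at e
    have := pos_peak Pl; rw [e] at this; omega)
  have p2 := b2 Pu c.hPu (by
    intro e; rw [Set.mem_singleton_iff] at e
    have := pos_peak Pu; rw [e] at this; omega)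
  have r1 := c.rev v
  have r2 := c.rev w
  omega

theorem Ctx.boundary (c : Ctx D Pl Pu p q) (htod : TopsOnlyDomain D) {F : A → A → A}
    (h : Rule2 D (Zs Pl Pu p q) F) {w v : A} (hwv : AdjIn D (Zs Pl Pu p q) w v)
    (e1 : F w v = v) (e2 : F v w = v)
    (hleaf : ∀ u, AdjIn D (Zs Pl Pu p q) w u → u = v)
    (hw1 : pos Pl w = p) : St D Pl p := by
  have hvw : v ≠ w := hwv.1.ne'
  have hpq := c.hpq
  let S : Set A := {a | pos Pl a ≤ p}
  have hwS : w ∈ S := hw1.le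
  have hv1 : p < pos Pl v := by
    rcases hwv.2.2.1.lt_or_eq with q | q
    · exact q
    · exact absurd (pos_inj (q.symm.trans hw1.symm)) hvw
  have hvS : v ∉ S := fun hh => by have : pos Pl v ≤ p := hh; omega
  have rw' := c.rev w
  have cross : ∀ a b, (adjGraph D).Adj a b → a ∈ S → b ∉ S → a = w ∧ b = v := by
    intro a b hab ha hb
    have ha : pos Pl a ≤ p := ha
    have hb : ¬ pos Pl b ≤ p := hb
    have ea : a = w := by
      by_contra hh
      have : pos Pl a ≠ p := fun e => hh (pos_inj (e.trans hw1.symm))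
      have := c.enter hab (by omega) (by omega)
      omega
    refine ⟨ea, ?_⟩
    subst ea
    refine hleaf b ⟨hab, hwv.2.1, by omega, ?_⟩
    by_contra hh
    have := c.swap.enter hab.symm (by omega) (by omega)
    omega
  have b1 := lemB c.hc h (S := S) hwv.2.2 hvS hwS hwv.1 e1 e2
    (by
      intro x hx
      have := (RA.univ c.hG w x).retract (T := S) (fun a => if a ∈ S then a else w) (by
        intro a b ⟨hab, _, _⟩
        by_cases ha : a ∈ S
        · by_cases hb : b ∈ S
          · right; simp only [ha, hb, if_true]; exact ⟨hab, ha, hb⟩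
          · left; simp only [ha, hb, if_true, if_false]; exact (cross a b hab ha hb).1
        · by_cases hb : b ∈ S
          · left; simp only [ha, hb, if_true, if_false]; exact (cross b a hab.symm hb ha).1.symm
          · left; simp only [ha, hb, if_false])
      simpa only [hwS, hx, if_true] using this)
    (by
      intro u hu huS
      have : RA D (Zs Pl Pu p q \ {w}) v u :=
        RA.leaf hleaf hvw (c.Zconn _ hwv.2.2 _ hu) (fun e => huS (e ▸ hwS))
      have e : Zs Pl Pu p q \ S = Zs Pl Pu p q \ {w} := by
        ext a
        constructor
        · rintro ⟨a1, a2⟩; exact ⟨a1, fun e => a2 (by rw [Set.mem_singleton_iff] at e; rw [e]; exact hwS)⟩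
        · rintro ⟨a1, a2⟩
          refine ⟨a1, fun e => a2 (pos_inj (P := Pl) ?_)⟩
          have e : pos Pl a ≤ p := e
          have := a1.1
          omega
      rwa [e])
    (by
      intro P hP hpk z hz hzZ
      have hpk : pos Pl (peak P) ≤ p := hpk
      have hz : ¬ pos Pl z ≤ p := hz
      have hz2 : pos Pu z < q := by
        by_contra hh
        exact hzZ ⟨by omega, by omega⟩
      have e : pos Pu (rk Pu q) = q := pos_rk _ (by omega)
      have r := c.rev (rk Pu q)
      have r' := c.rev (peak P)
      refine ⟨rk Pu q, ⟨by omega, by omega⟩, ?_, ?_⟩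
      · intro e'; have e' : pos Pl (rk Pu q) ≤ p := e'; omega
      · exact F1 c.R hP (by omega) (by omega) (by omega))
  have b2 := lemPNT c.hc htod c.hG (S := S) (pos Pl) (w := w) (v := v) hwS hvS b1
    (by
      intro P hP hpk z hz
      have hpk : ¬ pos Pl (peak P) ≤ p := hpk
      have hz : pos Pl z ≤ p := hz
      by_cases e : z = w
      · rw [e]
      · have : pos Pl z ≠ p := fun e' => e (pos_inj (e'.trans hw1.symm))
        exact (F1 c.L hP (by omega) (by omega) (by omega)).le)
    (by
      intro P hP hpk y hy z hz g1 g2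
      rcases g2.lt_or_eq with g | g
      · exact (F2 c.L hP g hy g1).le
      · rw [pos_inj g])
    (by
      intro P hP hpk
      have hpk : pos Pl (peak P) ≤ p := hpk
      exact F2 c.L hP (by omega) (by omega) (by omega))
    (by intro y hy; have hy : pos Pl y ≤ p := hy; omega)
    (by
      intro u hu
      have := (RA.univ c.hG v u).retract (T := Sᶜ) (fun a => if a ∈ S then v else a) (by
        intro a b ⟨hab, _, _⟩
        by_cases ha : a ∈ S
        · by_cases hb : b ∈ S
          · left; simp only [ha, hb, if_true]
          · left; simp only [ha, hb, if_true, if_false]; exact (cross a b hab ha hb).2.symm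
        · by_cases hb : b ∈ S
          · left; simp only [ha, hb, if_true, if_false]; exact (cross b a hab.symm hb ha).2
          · right; simp only [ha, hb, if_false]; exact ⟨hab, ha, hb⟩)
      simpa only [hvS, hu, if_false] using this)
  have hv : v = rk Pl (p + 1) := by
    have e : pos Pl (rk Pl (p + 1)) = p + 1 := pos_rk _ (by omega)
    have := b1 Pl c.hPl (show pos Pl (peak Pl) ≤ p by rw [pos_peak]; omega) (rk Pl (p + 1))
      (fun hh => by have hh : pos Pl (rk Pl (p + 1)) ≤ p := hh; omega)
    exact pos_inj (P := Pl) (by omega)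
  have hw : w = rk Pl p := by rw [← hw1, rk_pos]
  intro P hP
  rw [← hv, ← hw]
  refine ⟨fun hh => b2 P hP (fun e => by have e : pos Pl (peak P) ≤ p := e; omega), ?_⟩
  intro hh j hj hjm
  have e : pos Pl (rk Pl j) = j := pos_rk _ hjm
  have := b1 P hP hh (rk Pl j) (fun hh => by have hh : pos Pl (rk Pl j) ≤ p := hh; omega)
  have ne : pos P v ≠ pos P (rk Pl j) := by
    intro e'
    have := congrArg (pos Pl) ((pos_inj e').symm.trans hv)
    rw [e, pos_rk _ (by omega)] at this
    omega
  omega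

theorem Ctx.dict (c : Ctx D Pl Pu p q) (htod : TopsOnlyDomain D) (hp : ¬ St D Pl p)
    (hq : ¬ St D Pu q) {F : A → A → A} (h : Rule2 D (Zs Pl Pu p q) F) :
    (∀ x ∈ Zs Pl Pu p q, ∀ y ∈ Zs Pl Pu p q, F x y = x) ∨
    (∀ x ∈ Zs Pl Pu p q, ∀ y ∈ Zs Pl Pu p q, F x y = y) := by
  refine h.dict c.hc c.Zconn ?_
  intro x y hxy e1 e2
  obtain ⟨w, v, hwv, e1, e2, hleaf⟩ := h.leaf c.hc _ x y rfl hxy e1 e2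
  by_cases h1 : pos Pl w = p
  · exact hp (c.boundary htod h hwv e1 e2 hleaf h1)
  by_cases h2 : pos Pu w = q
  · rw [Zs_swap] at h hwv hleaf
    exact hq (c.swap.boundary htod h hwv e1 e2 hleaf h2)
  have := hwv.2.1
  exact c.interior htod h hwv e1 e2 hleaf (lt_of_le_of_ne this.1 (Ne.symm h1))
    (lt_of_le_of_ne this.2 (Ne.symm h2))

end TOH

namespace TOH

section nvoter
variable {D : Set (Pref A)} {n : ℕ} {f : (Fin n → A) → A}

theorem grp (hsp : ∀ i x, SPv D (fun b => f (Function.update x i b))) {P : Pref A} (hP : P ∈ D)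
    (s : Finset (Fin n)) (z : Fin n → A) :
    pos P (f (s.piecewise (fun _ => peak P) z)) ≤ pos P (f z) := by
  induction s using Finset.induction_on with
  | empty => simp
  | insert i s hi ih =>
    rw [Finset.piecewise_insert]
    have := hsp i (s.piecewise (fun _ => peak P) z) P hP (s.piecewise (fun _ => peak P) z i)
    simp only [Function.update_eq_self] at this
    exact this.trans ih

theorem grpSP (hsp : ∀ i x, SPv D (fun b => f (Function.update x i b)))
    (s : Finset (Fin n)) (z : Fin n → A) : SPv D (fun b => f (s.piecewise (fun _ => b) z)) := by
  intro P hP b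
  have := grp hsp hP s (s.piecewise (fun _ => b) z)
  have e : s.piecewise (fun _ => peak P) (s.piecewise (fun _ => b) z)
      = s.piecewise (fun _ => peak P) z := by
    ext j; by_cases hj : j ∈ s <;> simp [hj]
  rwa [e] at this

theorem rangeN (hc : 3 ≤ Fintype.card A)
    (hsp : ∀ i x, SPv D (fun b => f (Function.update x i b))) {Z : Set A}
    (hun : ∀ a ∈ Z, f (fun _ => a) = a) (hZ : ∀ x ∈ Z, ∀ y ∈ Z, RA D Z x y)
    {z0 : A} (hz0 : z0 ∈ Z) (x : Fin n → A) (hx : ∀ j, x j ∈ Z) : f x ∈ Z := by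
  have key : ∀ s : Finset (Fin n), f (s.piecewise x (fun _ => z0)) ∈ Z := by
    intro s
    induction s using Finset.induction_on with
    | empty => simp only [Finset.piecewise_empty]; rw [hun z0 hz0]; exact hz0
    | insert i s hi ih =>
      rw [Finset.piecewise_insert]
      refine (hsp i (s.piecewise x (fun _ => z0))).range hc (hZ _ hz0 _ (hx i)) ?_
      have : Function.update (s.piecewise x (fun _ => z0)) i z0 = s.piecewise x (fun _ => z0) := by
        rw [Function.update_eq_self_iff]; simp [hi]
      simp only [this]
      exact ih
  have := key Finset.univ
  rwa [Finset.piecewise_univ] at this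

theorem nvoter (hc : 3 ≤ Fintype.card A) (hG : (adjGraph D).Connected)
    (hsp : ∀ i x, SPv D (fun b => f (Function.update x i b))) {Z : Set A}
    (hun : ∀ a ∈ Z, f (fun _ => a) = a) (hZ : ∀ x ∈ Z, ∀ y ∈ Z, RA D Z x y)
    {z0 z1 : A} (hz0 : z0 ∈ Z) (hz1 : z1 ∈ Z) (hne : z0 ≠ z1)
    (hK : ∀ F, Rule2 D Z F →
      (∀ x ∈ Z, ∀ y ∈ Z, F x y = x) ∨ (∀ x ∈ Z, ∀ y ∈ Z, F x y = y)) :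
    ∃ i, ∀ x : Fin n → A, (∀ j, x j ∈ Z) → f x = x i := by
  let Win : Finset (Fin n) → Prop := fun S =>
    ∀ x ∈ Z, ∀ y ∈ Z, f (S.piecewise (fun _ => x) (fun _ => y)) = x
  have comp : ∀ (S : Finset (Fin n)) (x y : A), S.piecewise (fun _ => x) (fun _ => y)
      = Sᶜ.piecewise (fun _ => y) (fun _ => x) := by
    intro S x y; ext j; by_cases hj : j ∈ S <;> simp [hj]
  have win : ∀ S, Win S ∨ Win Sᶜ := by
    intro S
    have := hK (fun x y => f (S.piecewise (fun _ => x) (fun _ => y)))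
      ⟨fun y => grpSP hsp S _, fun x => by
        have : (fun y => f (S.piecewise (fun _ => x) (fun _ => y)))
          = fun y => f (Sᶜ.piecewise (fun _ => y) (fun _ => x)) := by
          funext y; rw [comp]
        simp only [this]
        exact grpSP hsp Sᶜ _, fun x hx => by
        simp only [Finset.piecewise_same]; exact hun x hx⟩
    rcases this with h | h
    · exact Or.inl h
    · right
      intro x hx y hy
      rw [← comp]
      exact h y hy x hx
  have hU : Win Finset.univ := by
    intro x hx y hy
    rw [Finset.piecewise_univ]; exact hun x hx
  obtain ⟨S, hS, hmin⟩ := (Set.toFinite {S | Win S}).exists_minimalFor Finset.card _ ⟨_, hU⟩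
  have hmin' : ∀ T : Finset (Fin n), T.card < S.card → ¬ Win T := by
    intro T hT hW
    have := hmin hW hT.le
    omega
  have hS : Win S := hS
  have hne0 : S.Nonempty := by
    rw [Finset.nonempty_iff_ne_empty]
    rintro rfl
    have := hS z0 hz0 z1 hz1
    rw [Finset.piecewise_empty, hun z1 hz1] at this
    exact hne this.symm
  obtain ⟨i, hi⟩ := hne0
  have hsing : Win {i} := by
    by_cases hT : S.erase i = ∅
    · have : S = {i} := by
        rw [← Finset.insert_erase hi, hT]; rfl
      rwa [← this]
    exfalso
    set T := S.erase i with hTdef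
    have hiT : i ∉ T := Finset.notMem_erase i S
    have hST : S = insert i T := (Finset.insert_erase hi).symm
    have cT : T.card + 1 = S.card := Finset.card_erase_add_one hi
    have cT0 : 0 < T.card := Finset.card_pos.mpr (Finset.nonempty_iff_ne_empty.mpr hT)
    have w1 : Win {i}ᶜ := (win {i}).resolve_left (hmin' _ (by rw [Finset.card_singleton]; omega))
    have w2 : Win Tᶜ := (win T).resolve_left (hmin' _ (by omega))
    have cm : ∀ x y : A, ({i} : Finset (Fin n)).piecewise (fun _ => x)
        (T.piecewise (fun _ => y) (fun _ => z0)) =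
        T.piecewise (fun _ => y) (({i} : Finset (Fin n)).piecewise (fun _ => x) (fun _ => z0)) := by
      intro x y; ext j
      by_cases hj : j = i
      · subst hj; simp [hiT]
      · by_cases hj2 : j ∈ T <;> simp [hj, hj2]
    have := hK (fun x y => f (({i} : Finset (Fin n)).piecewise (fun _ => x)
        (T.piecewise (fun _ => y) (fun _ => z0))))
      ⟨fun y => grpSP hsp _ _, fun x => by
        simp only [cm]
        exact grpSP hsp _ _, fun x hx => by
        have e : ({i} : Finset (Fin n)).piecewise (fun _ => x)
            (T.piecewise (fun _ => x) (fun _ => z0)) = S.piecewise (fun _ => x) (fun _ => z0) := by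
          ext j
          by_cases hj : j = i
          · subst hj; simp [hST]
          · by_cases hj2 : j ∈ T <;> simp [hj, hj2, hST]
        simp only [e]
        exact hS x hx z0 hz0⟩
    rcases this with h | h
    · have a := h z1 hz1 z0 hz0
      have b := w1 z0 hz0 z1 hz1
      rw [← comp] at b
      simp only [Finset.piecewise_same] at a
      exact hne (b.symm.trans a)
    · have a := h z0 hz0 z1 hz1
      have b := w2 z0 hz0 z1 hz1
      rw [← comp] at b
      simp only [cm, Finset.piecewise_same] at a
      exact hne (b.symm.trans a)
  refine ⟨i, fun x hx => ?_⟩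
  have hw := rangeN hc hsp hun hZ hz0 x hx
  obtain ⟨P, hP, hpk⟩ := minRich hc hG (f x)
  have := grp hsp hP {i}ᶜ x
  have h0 : pos P (f x) = 0 := by rw [← hpk]; exact pos_peak P
  rw [h0] at this
  have e1 := eq_peak (Nat.le_zero.mp this)
  have e2 : ({i}ᶜ : Finset (Fin n)).piecewise (fun _ => peak P) x =
      ({i} : Finset (Fin n)).piecewise (fun _ => x i) (fun _ => peak P) := by
    ext j
    by_cases hj : j = i
    · subst hj; simp
    · simp [hj]
  rw [e2, hpk, hsing _ (hx i) _ hw] at e1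
  exact e1.symm

end nvoter

theorem Ctx.dictOn {D : Set (Pref A)} {Pl Pu : Pref A} {p q : ℕ}
    (c : Ctx D Pl Pu p q) (htod : TopsOnlyDomain D) (hp : ¬ St D Pl p)
    (hq : ¬ St D Pu q) {n : ℕ} (hn : 2 ≤ n) (f : (Fin n → Pref A) → A)
    (hr : IsRule D f) (hs : StrategyProof D f) : DictatorOn D f (Zs Pl Pu p q) := by
  have hto := htod n hn f hr hs
  choose rep hrep hpk using minRich c.hc c.hG
  have hd : ∀ x : Fin n → A, InDom D (fun j => rep (x j)) := fun x j => hrep _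
  have hpq := c.hpq
  have m0 : rk Pl p ∈ Zs Pl Pu p q := by
    have e : pos Pl (rk Pl p) = p := pos_rk _ (by omega)
    have r := c.rev (rk Pl p)
    exact ⟨by omega, by omega⟩
  have m1 : rk Pl (p+1) ∈ Zs Pl Pu p q := by
    have e : pos Pl (rk Pl (p+1)) = p+1 := pos_rk _ (by omega)
    have r := c.rev (rk Pl (p+1))
    exact ⟨by omega, by omega⟩
  have hne : rk Pl p ≠ rk Pl (p+1) := by
    intro e
    have := congrArg (pos Pl) e
    rw [pos_rk _ (by omega), pos_rk _ (by omega)] at this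
    omega
  obtain ⟨i, hi⟩ := nvoter (f := fun x => f (fun j => rep (x j))) c.hc c.hG
    (by
      intro i x P hP b
      have e1 : f (fun j => rep (Function.update x i (peak P) j)) =
          f (Function.update (fun j => rep (x j)) i P) := by
        apply hto _ _ (hd _)
        · intro j
          by_cases hj : j = i
          · subst hj; simpa using hP
          · simp [hj, hrep]
        · intro j
          by_cases hj : j = i
          · subst hj; simp [hpk]
          · simp [hj]
      have e2 : (fun j => rep (Function.update x i b j)) =
          Function.update (Function.update (fun j => rep (x j)) i P) i (rep b) := by
        ext j
        by_cases hj : j = i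
        · subst hj; simp
        · simp [hj]
      have := hs (Function.update (fun j => rep (x j)) i P) (by
        intro j
        by_cases hj : j = i
        · subst hj; simpa using hP
        · simp [hj, hrep]) i (rep b) (hrep b)
      simp only [e1]
      rw [e2]
      rcases this with h | h
      · rw [← h]
      · rw [Function.update_self] at h
        exact le_of_lt h)
    (fun a _ => hr _ (fun _ => hrep a) a (fun _ => hpk a)) c.Zconn m0 m1 hne
    (fun F hF => c.dict htod hp hq hF)
  refine ⟨i, fun P hP hPZ => ?_⟩
  rw [← hi (fun j => peak (P j)) hPZ]
  exact hto _ _ hP (hd _) (fun j => (hpk _).symm)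

end TOH

namespace TOH

section tree
variable {T : SimpleGraph A}

theorem tri (hT : T.IsTree) (x y z : A) : T.dist x z ≤ T.dist x y + T.dist y z :=
  hT.connected.dist_triangle

theorem dist0 (hT : T.IsTree) {x y : A} (h : T.dist x y = 0) : x = y :=
  (hT.connected.dist_eq_zero_iff).mp h

/-- a neighbour of `z` closer to `u`. -/
theorem exists_closer (hT : T.IsTree) {u z : A} (h : z ≠ u) :
    ∃ z', T.Adj z z' ∧ T.dist u z = T.dist u z' + 1 := by
  obtain ⟨w, hw⟩ := hT.connected.exists_walk_length_eq_dist z u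
  cases w with
  | nil => exact absurd rfl h
  | @cons _ z' _ hadj w' =>
    refine ⟨z', hadj, ?_⟩
    have h1 := T.dist_le w'
    rw [SimpleGraph.Walk.length_cons] at hw
    have h2 := tri hT u z' z
    have h3 : T.dist z' z = 1 := SimpleGraph.dist_eq_one_iff_adj.mpr hadj.symm
    rw [T.dist_comm (u := u) (v := z), T.dist_comm (u := u) (v := z')] at *
    omega

theorem closer_unique (hT : T.IsTree) {u z x y : A} (hx : T.Adj z x) (hy : T.Adj z y)
    (dx : T.dist u z = T.dist u x + 1) (dy : T.dist u z = T.dist u y + 1) : x = y := by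
  obtain ⟨p, hp, lp⟩ := hT.connected.exists_path_of_dist x u
  obtain ⟨q, hq, lq⟩ := hT.connected.exists_path_of_dist y u
  have a1 : (SimpleGraph.Walk.cons hx p).length = T.dist z u := by
    rw [SimpleGraph.Walk.length_cons, lp, T.dist_comm, T.dist_comm (u := z)]; omega
  have a2 : (SimpleGraph.Walk.cons hy q).length = T.dist z u := by
    rw [SimpleGraph.Walk.length_cons, lq, T.dist_comm, T.dist_comm (u := z)]; omega
  have b1 := SimpleGraph.Walk.isPath_of_length_eq_dist _ a1
  have b2 := SimpleGraph.Walk.isPath_of_length_eq_dist _ a2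
  have := congrArg SimpleGraph.Walk.snd ((hT.existsUnique_path z u).unique b1 b2)
  simpa using this

theorem glue (hT : T.IsTree) {x y w : A} (hyw : y ≠ w)
    (h1 : T.dist x w = T.dist x y + T.dist y w) (k : ℕ) : ∀ t, T.dist w t = k →
    T.dist y t = T.dist y w + T.dist w t → T.dist x t = T.dist x w + T.dist w t := by
  induction k with
  | zero => intro t ht _; rw [dist0 hT ht]; simp
  | succ k ih =>
    intro t ht h2
    obtain ⟨t', ha, hd⟩ := exists_closer hT (u := w) (z := t) (by
      rintro rfl; simp at ht)
    have e1 : T.dist t' t = 1 := SimpleGraph.dist_eq_one_iff_adj.mpr ha.symm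
    have q1 := tri hT y t' t
    have q2 := tri hT y w t'
    have h3 := ih t' (by omega) (by omega)
    rcases hT.dist_eq_dist_add_one_of_adj x ha with e | e
    · omega
    exfalso
    by_cases hk : t' = w
    · subst hk
      obtain ⟨w', hb, hd'⟩ := exists_closer hT (u := y) (z := t') (Ne.symm hyw)
      have q3 := tri hT x y w'
      have q4 : T.dist x t' = T.dist x w' + 1 := by
        rcases hT.dist_eq_dist_add_one_of_adj x hb with e' | e' <;> omega
      have := closer_unique hT ha.symm hb e q4
      subst this
      omega
    · obtain ⟨t'', hb, hd'⟩ := exists_closer hT (u := w) (z := t') hk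
      have q3 := tri hT x w t''
      have q4 : T.dist x t' = T.dist x t'' + 1 := by
        rcases hT.dist_eq_dist_add_one_of_adj x hb with e' | e' <;> omega
      have := closer_unique hT ha.symm hb e q4
      subst this
      omega

theorem mem_side {a b z : A} : z ∈ sideSet T a b ↔ T.dist z a + T.dist a b = T.dist z b :=
  Iff.rfl

theorem mem_intv {a b z : A} : z ∈ intv T a b ↔ T.dist a z + T.dist z b = T.dist a b :=
  Iff.rfl

theorem intv_comm (a b : A) : intv T a b = intv T b a := by
  ext z
  rw [mem_intv, mem_intv, T.dist_comm (u := a) (v := z), T.dist_comm (u := z) (v := b),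
    T.dist_comm (u := a) (v := b)]
  omega

/-- The usable consequence of dual thresholds. -/
def DT (T : SimpleGraph A) (a b : A) : Prop :=
  a ≠ b ∧ ∀ c, c ∈ intv T a b ∨ c ∈ sideSet T a b ∨ c ∈ sideSet T b a

theorem DT.swap {a b : A} (h : DT T a b) : DT T b a := by
  refine ⟨h.1.symm, fun c => ?_⟩
  rw [intv_comm]
  rcases h.2 c with h | h | h
  · exact Or.inl h
  · exact Or.inr (Or.inr h)
  · exact Or.inr (Or.inl h)

theorem HybridPref.swap {a b : A} {P : Pref A} (h : HybridPref T a b P) : HybridPref T b a P := by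
  refine ⟨fun y z hyz => h.1 y z hyz.symm, ?_, ?_⟩
  · rw [intv_comm]; exact h.2.2
  · rw [intv_comm]; exact h.2.1

theorem DT.of {a b : A} (h : DualThresholds T a b) : DT T a b := by
  refine ⟨h.1, fun c => ?_⟩
  by_cases hc : c ∈ intv T a b
  · exact Or.inl hc
  right
  have ha : a ∈ intv T a b := by rw [mem_intv]; simp
  have hb : b ∈ intv T a b := by rw [mem_intv]; simp
  have hex : ∃ a', IsProjPt T (intv T a b) c a' := by
    by_contra hh
    have := h.2 c hc
    rw [projOn, dif_neg hh] at this
    rcases this with e | e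
    · exact hc (e ▸ ha)
    · exact hc (e ▸ hb)
  have sp : IsProjPt T (intv T a b) c (projOn T (intv T a b) c) := by
    rw [projOn, dif_pos hex]; exact hex.choose_spec
  rcases h.2 c hc with e | e
  · left; rw [e] at sp; exact sp.2 b hb
  · right; rw [e] at sp; exact sp.2 a ha

theorem DT.t1 (hT : T.IsTree) {a b : A} (h : DT T a b) {u z : A}
    (hu : u ∉ sideSet T a b \ {a}) (hz : z ∈ sideSet T a b) :
    T.dist u z = T.dist u a + T.dist a z := by
  by_cases hua : u = a
  · subst hua; simp
  rw [mem_side] at hz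
  have c1 : T.dist a z = T.dist z a := T.dist_comm
  rcases h.2 u with h1 | h1 | h1
  · rw [mem_intv] at h1
    have q1 := tri hT z u b
    have q2 := tri hT u a z
    have c2 : T.dist u z = T.dist z u := T.dist_comm
    have c3 : T.dist a u = T.dist u a := T.dist_comm
    omega
  · exact absurd ⟨h1, hua⟩ hu
  · rw [mem_side] at h1
    refine glue hT h.1.symm h1.symm _ z rfl ?_
    have c2 : T.dist b a = T.dist a b := T.dist_comm
    have c3 : T.dist b z = T.dist z b := T.dist_comm
    omega

theorem DT.disj (hT : T.IsTree) {a b : A} (h : DT T a b) {z : A}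
    (hz : z ∈ sideSet T a b) : z ∉ sideSet T b a := by
  intro h2
  rw [mem_side] at hz h2
  have c2 : T.dist b a = T.dist a b := T.dist_comm
  exact h.1 (dist0 hT (by omega))

variable {D : Set (Pref A)} {Pl Pu : Pref A} {a b : A}

/-- Main structural lemma: on the side containing the peak of `Pl`. -/
theorem side_main (hT : T.IsTree) (h : DT T a b) (hD : ∀ P ∈ D, HybridPref T a b P)
    (hPl : Pl ∈ D) (hPu : Pu ∈ D) (rev : ∀ a, pos Pl a + pos Pu a + 1 = Fintype.card A)
    (hl : peak Pl ∈ sideSet T a b \ {a}) (hu : peak Pu ∉ sideSet T a b \ {a}) :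
    (∀ x ∈ sideSet T a b \ {a}, pos Pl x < pos Pl a) ∧ ∀ k < pos Pl a, St D Pl k := by
  have hb0 : b ∈ intv T a b := by rw [mem_intv]; simp
  have ha0 : a ∈ sideSet T a b := by rw [mem_side]; simp
  have hbY : b ∈ sideSet T b a := by rw [mem_side]; simp
  -- the first preference condition, in terms of distances
  have hyb : ∀ P ∈ D, ∀ y ∈ sideSet T a b, ∀ z ∈ sideSet T a b, y ≠ z →
      T.dist (peak P) z = T.dist (peak P) y + T.dist y z → pos P y < pos P z := by
    intro P hP y hy z hz hne e
    exact (hD P hP).1 y z (Or.inl ⟨hy, hz⟩) hne e.symm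
  -- for peaks in X \ a, a beats everything outside X
  have out : ∀ P ∈ D, peak P ∈ sideSet T a b \ {a} → ∀ t, t ∉ sideSet T a b →
      pos P a < pos P t := by
    intro P hP hpk t ht
    have best := (hD P hP).2.1 hpk
    rcases h.2 t with h1 | h1 | h1
    · exact best.2 t h1 (fun e => ht (e ▸ ha0))
    · exact absurd h1 ht
    · have h2 : pos P a < pos P b := best.2 b hb0 h.1.symm
      by_cases htb : t = b
      · rw [htb]; exact h2
      · have := h.swap.t1 hT (u := peak P) (fun hh => h.disj hT hpk.1 hh.1) h1
        have h3 : pos P b < pos P t :=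
          (hD P hP).1 b t (Or.inr ⟨hbY, h1⟩) (Ne.symm htb) this.symm
        omega
  have lt1 : ∀ x ∈ sideSet T a b \ {a}, pos Pl x < pos Pl a := by
    intro x hx
    have := hyb Pu hPu a ha0 x hx.1 (fun e => hx.2 e.symm) (h.t1 hT hu hx.1)
    have r1 := rev x
    have r2 := rev a
    omega
  have inX : ∀ x, pos Pl x ≤ pos Pl a → x ∈ sideSet T a b := by
    intro x hx
    by_contra hh
    have := out Pl hPl hl x hh
    omega
  -- next vertices
  have next : ∀ x ∈ sideSet T a b \ {a}, ∃ x' ∈ sideSet T a b, T.Adj x x' ∧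
      T.dist a x = T.dist a x' + 1 ∧ T.dist (peak Pl) x' = T.dist (peak Pl) x + 1 := by
    intro x hx
    obtain ⟨x', hadj, hd⟩ := exists_closer hT (u := a) (z := x) hx.2
    have e1 : T.dist x x' = 1 := SimpleGraph.dist_eq_one_iff_adj.mpr hadj
    have e1' : T.dist x' x = 1 := SimpleGraph.dist_eq_one_iff_adj.mpr hadj.symm
    have hx' : x' ∈ sideSet T a b := by
      have h1 := hx.1
      rw [mem_side] at h1 ⊢
      have q1 := tri hT x x' b
      have q2 := tri hT x' a b
      have c1 : T.dist a x = T.dist x a := T.dist_comm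
      have c2 : T.dist a x' = T.dist x' a := T.dist_comm
      omega
    refine ⟨x', hx', hadj, hd, ?_⟩
    have hne : x' ≠ x := hadj.ne'
    have hne2 : x ≠ x' := hadj.ne
    have p1 := hyb Pu hPu x' hx' x hx.1 hne (by
      rw [h.t1 hT hu hx.1, h.t1 hT hu hx', hd, e1']; omega)
    rcases hT.dist_eq_dist_add_one_of_adj (peak Pl) hadj with e | e
    · exfalso
      have p2 := hyb Pl hPl x' hx' x hx.1 hne (by omega)
      have r1 := rev x
      have r2 := rev x'
      omega
    · exact e
  -- uniqueness at a given distance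
  have uniq : ∀ k, ∀ x ∈ sideSet T a b, ∀ y ∈ sideSet T a b, T.dist a x = k → T.dist a y = k →
      x = y := by
    intro k
    induction k with
    | zero => intro x _ y _ h1 h2; rw [← dist0 hT h1, ← dist0 hT h2]
    | succ k ih =>
      intro x hx y hy h1 h2
      obtain ⟨x', m1, a1, d1, o1⟩ := next x ⟨hx, by rintro rfl; simp at h1⟩
      obtain ⟨y', m2, a2, d2, o2⟩ := next y ⟨hy, by rintro rfl; simp at h2⟩
      have := ih x' m1 y' m2 (by omega) (by omega)
      subst this
      exact closer_unique hT a1.symm a2.symm o1 o2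
  have between : ∀ e, ∀ x ∈ sideSet T a b, ∀ y ∈ sideSet T a b, T.dist a x = e + T.dist a y →
      T.dist x y = e := by
    intro e
    induction e with
    | zero => intro x hx y hy h1; rw [uniq _ x hx y hy (by omega) rfl]; simp
    | succ e ih =>
      intro x hx y hy h1
      obtain ⟨x', m1, a1, d1, o1⟩ := next x ⟨hx, by rintro rfl; simp at h1; omega⟩
      have := ih x' m1 y hy (by omega)
      have q1 := tri hT x x' y
      have e1 : T.dist x x' = 1 := SimpleGraph.dist_eq_one_iff_adj.mpr a1
      have q2 := tri hT a y x
      have c1 : T.dist y x = T.dist x y := T.dist_comm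
      omega
  have hX : ∀ x ∈ sideSet T a b, ∀ y ∈ sideSet T a b, pos Pl x ≤ pos Pl y →
      T.dist a x = T.dist x y + T.dist a y := by
    intro x hx y hy hxy
    by_cases hd : T.dist a y ≤ T.dist a x
    · have := between (T.dist a x - T.dist a y) x hx y hy (by omega)
      omega
    · exfalso
      have := between (T.dist a y - T.dist a x) y hy x hx (by omega)
      have hne : x ≠ y := by rintro rfl; omega
      have c1 : T.dist x y = T.dist y x := T.dist_comm
      have p1 := hyb Pu hPu x hx y hy hne (by
        rw [h.t1 hT hu hx, h.t1 hT hu hy]; omega)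
      have r1 := rev x
      have r2 := rev y
      omega
  refine ⟨lt1, ?_⟩
  intro k hk P hP
  have hkm := pos_lt Pl a
  obtain ⟨x, hxk⟩ : ∃ x, x = rk Pl k := ⟨_, rfl⟩
  obtain ⟨y, hyk⟩ : ∃ y, y = rk Pl (k + 1) := ⟨_, rfl⟩
  have px : pos Pl x = k := by rw [hxk]; exact pos_rk _ (by omega)
  have py : pos Pl y = k + 1 := by rw [hyk]; exact pos_rk _ (by omega)
  rw [← hxk, ← hyk]
  have mx := inX x (by omega)
  have my := inX y (by omega)
  have hxy := hX x mx y my (by omega)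
  have cxy : T.dist x y = T.dist y x := T.dist_comm
  refine ⟨fun hlt => ?_, fun hle j hj hjm => ?_⟩
  · refine hyb P hP y my x mx (by rintro rfl; omega) ?_
    by_cases hpk : peak P ∈ sideSet T a b \ {a}
    · have h1 := hX x mx _ hpk.1 (by omega)
      have h2 := hX y my _ hpk.1 (by omega)
      have c1 : T.dist (peak P) x = T.dist x (peak P) := T.dist_comm
      have c2 : T.dist (peak P) y = T.dist y (peak P) := T.dist_comm
      omega
    · rw [h.t1 hT hpk mx, h.t1 hT hpk my]
      omega
  · obtain ⟨t, htj⟩ : ∃ t, t = rk Pl j := ⟨_, rfl⟩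
    have pt : pos Pl t = j := by rw [htj]; exact pos_rk _ hjm
    rw [← htj]
    have hpk : peak P ∈ sideSet T a b \ {a} := ⟨inX _ (by omega), fun e => by
      rw [Set.mem_singleton_iff] at e; rw [e] at hle; omega⟩
    have go : ∀ t ∈ sideSet T a b, k + 1 < pos Pl t → pos P y < pos P t := by
      intro t mt ht
      refine hyb P hP y my t mt (by rintro rfl; omega) ?_
      have h1 := hX _ hpk.1 y my (by omega)
      have h2 := hX _ hpk.1 t mt (by omega)
      have h3 := hX y my t mt (by omega)
      omega
    by_cases mt : t ∈ sideSet T a b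
    · exact go t mt (by omega)
    · have h1 := out P hP hpk t mt
      by_cases hya : y = a
      · rw [hya]; exact h1
      · have := go a ha0 (by
          have : pos Pl y ≠ pos Pl a := fun e => hya (pos_inj e)
          omega)
        omega

/-- If the step condition fails at `p` and `q`, the zone lies in the free interval. -/
theorem zone_sub (hT : T.IsTree) (h : DT T a b) (hD : ∀ P ∈ D, HybridPref T a b P)
    (hPl : Pl ∈ D) (hPu : Pu ∈ D) (rev : ∀ a, pos Pl a + pos Pu a + 1 = Fintype.card A)
    {p q : ℕ} (hp : ¬ St D Pl p) (hq : ¬ St D Pu q) : Zs Pl Pu p q ⊆ intv T a b := by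
  have key : ∀ a b, DT T a b → (∀ P ∈ D, HybridPref T a b P) → ∀ z ∈ Zs Pl Pu p q,
      z ∉ sideSet T a b \ {a} := by
    intro a b h hD z hz hzX
    have hb0 : b ∈ intv T a b := by rw [mem_intv]; simp
    have ha0 : a ∈ sideSet T a b := by rw [mem_side]; simp
    by_cases hl : peak Pl ∈ sideSet T a b \ {a}
    · by_cases hu : peak Pu ∈ sideSet T a b \ {a}
      · have h1 : pos Pl a < pos Pl b := ((hD Pl hPl).2.1 hl).2 b hb0 h.1.symm
        have h2 : pos Pu a < pos Pu b := ((hD Pu hPu).2.1 hu).2 b hb0 h.1.symm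
        have r1 := rev a
        have r2 := rev b
        omega
      · obtain ⟨s1, s2⟩ := side_main hT h hD hPl hPu rev hl hu
        have h1 := s1 z hzX
        have h2 : ¬ p < pos Pl a := fun hh => hp (s2 p hh)
        have := hz.1
        omega
    · by_cases hu : peak Pu ∈ sideSet T a b \ {a}
      · obtain ⟨s1, s2⟩ := side_main hT h hD hPu hPl
          (fun a => by have := rev a; omega) hu hl
        have h1 := s1 z hzX
        have h2 : ¬ q < pos Pu a := fun hh => hq (s2 q hh)
        have := hz.2
        omega
      · have ne : a ≠ z := fun e => hzX.2 e.symm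
        have h1 : pos Pl a < pos Pl z := (hD Pl hPl).1 a z (Or.inl ⟨ha0, hzX.1⟩) ne
          (h.t1 hT hl hzX.1).symm
        have h2 : pos Pu a < pos Pu z := (hD Pu hPu).1 a z (Or.inl ⟨ha0, hzX.1⟩) ne
          (h.t1 hT hu hzX.1).symm
        have r1 := rev a
        have r2 := rev z
        omega
  intro z hz
  have k1 := key a b h hD z hz
  have k2 := key b a h.swap (fun P hP => HybridPref.swap (hD P hP)) z hz
  rcases h.2 z with h1 | h1 | h1
  · exact h1
  · have : z = a := by by_contra hh; exact k1 ⟨h1, hh⟩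
    rw [this, mem_intv]; simp
  · have : z = b := by by_contra hh; exact k2 ⟨h1, hh⟩
    rw [this, mem_intv]; simp

end tree

end TOH

namespace TOH

section line
variable {Pl : Pref A}

theorem line_adj {a b : A} : (lineOf Pl).Adj a b ↔ pos Pl a + 1 = pos Pl b ∨ pos Pl b + 1 = pos Pl a := by
  have key : ∀ a b : A, (∃ k : ℕ, k + 1 < Fintype.card A ∧ rk Pl k = a ∧ rk Pl (k + 1) = b) ↔
      pos Pl a + 1 = pos Pl b := by
    intro a b
    constructor
    · rintro ⟨k, hk, rfl, rfl⟩
      rw [pos_rk _ (by omega), pos_rk _ hk]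
    · intro h
      refine ⟨pos Pl a, by rw [h]; exact pos_lt _ _, rk_pos _ _, ?_⟩
      rw [h, rk_pos]
  rw [lineOf, SimpleGraph.fromRel_adj, key, key]
  constructor
  · exact fun h => h.2
  · intro h
    refine ⟨?_, h⟩
    rintro rfl
    omega

theorem line_walk_le {a b : A} (w : (lineOf Pl).Walk a b) :
    (pos Pl a - pos Pl b) + (pos Pl b - pos Pl a) ≤ w.length := by
  induction w with
  | nil => simp
  | cons h w ih =>
    rw [SimpleGraph.Walk.length_cons]
    rcases line_adj.mp h with e | e <;> omega

theorem line_walk (d : ℕ) : ∀ a b : A, pos Pl a + d = pos Pl b →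
    ∃ w : (lineOf Pl).Walk a b, w.length = d := by
  induction d with
  | zero =>
    intro a b h
    have : a = b := pos_inj (by omega)
    subst this
    exact ⟨SimpleGraph.Walk.nil, rfl⟩
  | succ d ih =>
    intro a b h
    have hm := pos_lt Pl b
    have e : pos Pl (rk Pl (pos Pl a + 1)) = pos Pl a + 1 := pos_rk _ (by omega)
    obtain ⟨w, hw⟩ := ih (rk Pl (pos Pl a + 1)) b (by omega)
    exact ⟨SimpleGraph.Walk.cons (line_adj.mpr (Or.inl e.symm)) w, by simp [hw]⟩

theorem line_walk' (a b : A) : ∃ w : (lineOf Pl).Walk a b,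
    w.length = (pos Pl a - pos Pl b) + (pos Pl b - pos Pl a) := by
  rcases le_total (pos Pl a) (pos Pl b) with h | h
  · obtain ⟨w, hw⟩ := line_walk (Pl := Pl) (pos Pl b - pos Pl a) a b (by omega)
    exact ⟨w, by omega⟩
  · obtain ⟨w, hw⟩ := line_walk (Pl := Pl) (pos Pl a - pos Pl b) b a (by omega)
    exact ⟨w.reverse, by rw [SimpleGraph.Walk.length_reverse]; omega⟩

theorem line_dist (a b : A) :
    (lineOf Pl).dist a b = (pos Pl a - pos Pl b) + (pos Pl b - pos Pl a) := by
  obtain ⟨w, hw⟩ := line_walk' (Pl := Pl) a b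
  apply le_antisymm
  · rw [← hw]; exact SimpleGraph.dist_le w
  · obtain ⟨w', hw'⟩ := SimpleGraph.Reachable.exists_walk_length_eq_dist ⟨w⟩
    rw [← hw']
    exact line_walk_le w'

theorem line_tree : (lineOf Pl).IsTree := by
  refine ⟨⟨fun a b => ?_⟩, ?_⟩
  · obtain ⟨w, _⟩ := line_walk' (Pl := Pl) a b
    exact ⟨w⟩
  · rw [SimpleGraph.isAcyclic_iff_forall_adj_isBridge]
    have key : ∀ v w : A, pos Pl v + 1 = pos Pl w → (lineOf Pl).IsBridge s(v, w) := by
      intro v w h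
      rw [SimpleGraph.isBridge_iff, SimpleGraph.reachable_iff_reflTransGen]
      intro hr
      have : ∀ u, Relation.ReflTransGen ((lineOf Pl).deleteEdges {s(v, w)}).Adj v u →
          pos Pl u ≤ pos Pl v := by
        intro u hu
        induction hu with
        | refl => exact le_rfl
        | @tail b c _ hbc ih =>
          rw [SimpleGraph.deleteEdges_adj] at hbc
          rcases line_adj.mp hbc.1 with e | e
          · by_contra hh
            have e1 : b = v := pos_inj (P := Pl) (by omega)
            have e2 : c = w := pos_inj (P := Pl) (by omega)
            exact hbc.2 (by rw [e1, e2]; rfl)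
          · omega
      have := this w hr
      omega
    intro v w h
    rcases line_adj.mp h with e | e
    · exact key v w e
    · rw [Sym2.eq_swap]; exact key w v e

theorem line_intv {a b z : A} (h : pos Pl a ≤ pos Pl b) :
    z ∈ intv (lineOf Pl) a b ↔ pos Pl a ≤ pos Pl z ∧ pos Pl z ≤ pos Pl b := by
  rw [mem_intv, line_dist, line_dist, line_dist]; omega

theorem line_intv' {a b z : A} : z ∈ intv (lineOf Pl) a b ↔
    (pos Pl a ≤ pos Pl z ∧ pos Pl z ≤ pos Pl b) ∨ (pos Pl b ≤ pos Pl z ∧ pos Pl z ≤ pos Pl a) := by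
  rw [mem_intv, line_dist, line_dist, line_dist]; omega

theorem line_sideL {a b z : A} (h : pos Pl a < pos Pl b) :
    z ∈ sideSet (lineOf Pl) a b ↔ pos Pl z ≤ pos Pl a := by
  rw [mem_side, line_dist, line_dist, line_dist]; omega

theorem line_sideR {a b z : A} (h : pos Pl a < pos Pl b) :
    z ∈ sideSet (lineOf Pl) b a ↔ pos Pl b ≤ pos Pl z := by
  rw [mem_side, line_dist, line_dist, line_dist]; omega

theorem line_dual {a b : A} (h : pos Pl a < pos Pl b) : DualThresholds (lineOf Pl) a b := by
  refine ⟨by rintro rfl; omega, fun c hc => ?_⟩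
  rw [line_intv h.le] at hc
  have fin : ∀ x, IsProjPt (lineOf Pl) (intv (lineOf Pl) a b) c x →
      projOn (lineOf Pl) (intv (lineOf Pl) a b) c = x := by
    intro x hx
    have hex : ∃ a', IsProjPt (lineOf Pl) (intv (lineOf Pl) a b) c a' := ⟨x, hx⟩
    rw [projOn, dif_pos hex]
    have sp := hex.choose_spec
    have h1 := sp.2 x hx.1
    have h2 := hx.2 _ sp.1
    rw [line_intv'] at h1 h2
    exact pos_inj (P := Pl) (by omega)
  by_cases hca : pos Pl c < pos Pl a
  · left
    apply fin
    refine ⟨by rw [line_intv h.le]; omega, fun z hz => ?_⟩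
    rw [line_intv h.le] at hz
    rw [line_intv']; omega
  · right
    apply fin
    refine ⟨by rw [line_intv h.le]; omega, fun z hz => ?_⟩
    rw [line_intv h.le] at hz
    rw [line_intv']; omega

variable {D : Set (Pref A)} {Pu : Pref A} {p q : ℕ}

theorem hybrid_of (rev : ∀ a, pos Pl a + pos Pu a + 1 = Fintype.card A)
    (L : ∀ k < p, St D Pl k) (R : ∀ k < q, St D Pu k) {a b : A}
    (ha : pos Pl a = p) (hb : pos Pu b = q) (hab : pos Pl a < pos Pl b) :
    ∀ P ∈ D, HybridPref (lineOf Pl) a b P := by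
  intro P hP
  have ra := rev a
  have rb := rev b
  refine ⟨?_, ?_, ?_⟩
  · intro y z hyz hne hbt
    rw [line_intv'] at hbt
    have hne' : pos Pl y ≠ pos Pl z := fun e => hne (pos_inj e)
    have ry := rev y
    have rz := rev z
    have rp := rev (peak P)
    show pos P y < pos P z
    rcases hyz with ⟨h1, h2⟩ | ⟨h1, h2⟩
    · rw [line_sideL hab] at h1 h2
      rcases hbt with hb | hb
      · exact F2 L hP (by omega) (by omega) (by omega)
      · exact F1 L hP (by omega) (by omega) (by omega)
    · rw [line_sideR hab] at h1 h2
      rcases hbt with hb | hb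
      · exact F1 R hP (by omega) (by omega) (by omega)
      · exact F2 R hP (by omega) (by omega) (by omega)
  · rintro ⟨h1, h2⟩
    rw [line_sideL hab] at h1
    refine ⟨by rw [line_intv hab.le]; omega, fun y hy hya => ?_⟩
    rw [line_intv hab.le] at hy
    have : pos Pl y ≠ pos Pl a := fun e => hya (pos_inj e)
    exact F2 L hP (by omega) (by omega) (by omega)
  · rintro ⟨h1, h2⟩
    rw [line_sideR hab] at h1
    refine ⟨by rw [line_intv hab.le]; omega, fun y hy hya => ?_⟩
    rw [line_intv hab.le] at hy
    have : pos Pl y ≠ pos Pl b := fun e => hya (pos_inj e)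
    have ry := rev y
    have rp := rev (peak P)
    exact F2 R hP (by omega) (by omega) (by omega)

theorem of_hybrid (hPl : Pl ∈ D) (hPu : Pu ∈ D)
    (rev : ∀ a, pos Pl a + pos Pu a + 1 = Fintype.card A) {a b : A}
    (hab : pos Pl a < pos Pl b) (h : ∀ P ∈ D, HybridPref (lineOf Pl) a b P) :
    (∀ k < pos Pl a, St D Pl k) ∧ ∀ k < pos Pu b, St D Pu k := by
  have dt := DT.of (line_dual hab)
  have p0 := pos_peak Pl
  have u0 := pos_peak Pu
  have r1 := rev (peak Pl)
  have r2 := rev (peak Pu)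
  have ra := rev a
  have rb := rev b
  constructor
  · intro k hk
    refine (side_main line_tree dt h hPl hPu rev ⟨?_, ?_⟩ ?_).2 k hk
    · rw [line_sideL hab]; omega
    · intro e; rw [Set.mem_singleton_iff] at e; rw [e] at p0; omega
    · rintro ⟨e, _⟩
      rw [line_sideL hab] at e
      omega
  · intro k hk
    refine (side_main line_tree dt.swap (fun P hP => HybridPref.swap (h P hP)) hPu hPl
      (fun a => by have := rev a; omega) ⟨?_, ?_⟩ ?_).2 k hk
    · rw [line_sideR hab]; omega
    · intro e; rw [Set.mem_singleton_iff] at e; rw [e] at u0; omega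
    · rintro ⟨e, _⟩
      rw [line_sideR hab] at e
      omega

theorem line_ncard {a b : A} (h : pos Pl a ≤ pos Pl b) :
    (intv (lineOf Pl) a b).ncard = pos Pl b + 1 - pos Pl a := by
  have e : Set.image (pos Pl) (intv (lineOf Pl) a b) = (Finset.Icc (pos Pl a) (pos Pl b) : Finset ℕ) := by
    ext k
    simp only [Set.mem_image, Finset.coe_Icc, Set.mem_Icc]
    constructor
    · rintro ⟨z, hz, rfl⟩; exact (line_intv h).mp hz
    · intro hk
      have e : pos Pl (rk Pl k) = k := pos_rk _ (by have := pos_lt Pl b; omega)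
      exact ⟨rk Pl k, (line_intv h).mpr (by omega), e⟩
  rw [← Set.ncard_image_of_injective _ (fun x y h => pos_inj h : Function.Injective (pos Pl)), e,
    Set.ncard_coe_finset, Nat.card_Icc]

end line

/-- The leftmost-peak rule. -/
theorem leftmost {D : Set (Pref A)} {Pl Pu : Pref A} {p q : ℕ}
    (rev : ∀ a, pos Pl a + pos Pu a + 1 = Fintype.card A)
    (L : ∀ k < p, St D Pl k) (R : ∀ k < q, St D Pu k)
    (hpq : Fintype.card A < p + q + 3) (n : ℕ) (hn : 2 ≤ n) :
    ∃ f : (Fin n → Pref A) → A, IsRule D f ∧ StrategyProof D f ∧ Anonymous D f := by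
  have : Nonempty (Fin n) := ⟨⟨0, by omega⟩⟩
  let g : (Fin n → Pref A) → ℕ := fun P =>
    Finset.univ.inf' Finset.univ_nonempty (fun i => pos Pl (peak (P i)))
  have gle : ∀ P i, g P ≤ pos Pl (peak (P i)) := fun P i =>
    Finset.inf'_le _ (Finset.mem_univ i)
  have gex : ∀ P, ∃ i, g P = pos Pl (peak (P i)) := by
    intro P
    obtain ⟨i, _, hi⟩ := Finset.exists_mem_eq_inf' (Finset.univ_nonempty (α := Fin n))
      (fun i => pos Pl (peak (P i)))
    exact ⟨i, hi⟩
  have glt : ∀ P, g P < Fintype.card A := by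
    intro P
    obtain ⟨i, hi⟩ := gex P
    rw [hi]; exact pos_lt _ _
  refine ⟨fun P => rk Pl (g P), ?_, ?_, ?_⟩
  · intro P hP a ha
    obtain ⟨i, hi⟩ := gex P
    show rk Pl (g P) = a
    rw [hi, ha, rk_pos]
  · intro P hP i Q hQ
    show rk Pl (g P) = rk Pl (g (Function.update P i Q)) ∨
      pos (P i) (rk Pl (g P)) < pos (P i) (rk Pl (g (Function.update P i Q)))
    set P' := Function.update P i Q with hP'
    by_cases e : g P = g P'
    · left; rw [e]
    right
    have e1 : pos Pl (rk Pl (g P)) = g P := pos_rk _ (glt P)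
    have e2 : pos Pl (rk Pl (g P')) = g P' := pos_rk _ (glt P')
    by_cases hpk : rk Pl (g P) = peak (P i)
    · exact pos_lt_of_peak hpk (fun e' => by
        have := congrArg (pos Pl) e'
        omega)
    have hlt : g P < pos Pl (peak (P i)) := by
      rcases (gle P i).lt_or_eq with h | h
      · exact h
      · exact absurd (by rw [h, rk_pos]) hpk
    have hlt2 : g P' < g P := by
      obtain ⟨j, hj⟩ := gex P
      have hji : j ≠ i := by rintro rfl; omega
      have := gle P' j
      rw [hP', Function.update_of_ne hji, ← hj, ← hP'] at this
      omega
    have r1 := rev (rk Pl (g P))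
    have r2 := rev (rk Pl (g P'))
    have r3 := rev (peak (P i))
    by_cases hc : g P ≤ p
    · exact F1 L (hP i) (by omega) (by omega) (by omega)
    · exact F2 R (hP i) (by omega) (by omega) (by omega)
  · intro P hP σ
    show rk Pl (g (P ∘ σ)) = rk Pl (g P)
    congr 1
    apply le_antisymm
    · obtain ⟨i, hi⟩ := gex P
      have := gle (P ∘ σ) (σ.symm i)
      simp only [Function.comp, Equiv.apply_symm_apply] at this
      rw [hi]; exact this
    · obtain ⟨i, hi⟩ := gex (P ∘ σ)
      rw [hi]; exact gle P (σ i)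

theorem Ctx.notAnon {D : Set (Pref A)} {Pl Pu : Pref A} {p q : ℕ}
    (c : Ctx D Pl Pu p q) (htod : TopsOnlyDomain D) (hp : ¬ St D Pl p)
    (hq : ¬ St D Pu q) {n : ℕ} (hn : 2 ≤ n) (f : (Fin n → Pref A) → A)
    (hr : IsRule D f) (hs : StrategyProof D f) (ha : Anonymous D f) : False := by
  obtain ⟨i, hi⟩ := c.dictOn htod hp hq hn f hr hs
  have hpq := c.hpq
  have e0 : pos Pl (rk Pl p) = p := pos_rk _ (by omega)
  have e1 : pos Pl (rk Pl (p+1)) = p+1 := pos_rk _ (by omega)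
  have r0 := c.rev (rk Pl p)
  have r1 := c.rev (rk Pl (p+1))
  obtain ⟨P0, hP0, k0⟩ := minRich c.hc c.hG (rk Pl p)
  obtain ⟨P1, hP1, k1⟩ := minRich c.hc c.hG (rk Pl (p+1))
  have m0 : peak P0 ∈ Zs Pl Pu p q := by rw [k0]; exact ⟨by omega, by omega⟩
  have m1 : peak P1 ∈ Zs Pl Pu p q := by rw [k1]; exact ⟨by omega, by omega⟩
  have : Nontrivial (Fin n) := Fin.nontrivial_iff_two_le.mpr hn
  obtain ⟨j, hj⟩ := exists_ne i
  let P : Fin n → Pref A := fun k => if k = i then P0 else P1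
  have hP : InDom D P := by intro k; by_cases hk : k = i <;> simp [P, hk, hP0, hP1]
  have hZ : ∀ k, peak (P k) ∈ Zs Pl Pu p q := by
    intro k; by_cases hk : k = i <;> simp [P, hk, m0, m1]
  have s1 := hi P hP hZ
  have s2 := hi (P ∘ Equiv.swap i j) (fun k => hP _) (fun k => hZ _)
  rw [ha P hP, s1] at s2
  simp only [P, Function.comp, Equiv.swap_apply_left, if_true, if_neg hj, k0, k1] at s2
  rw [s2] at e0
  omega

end TOH

/-- a non-dictatorial, tops-only, unidimensional domain admits no
anonymous and strategy-proof rule iff it is a non-degenerate hybrid domain on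
the line `L^A`, i.e. an `(a_p, a_q)`-hybrid domain on `L^A` for some indices
`p < q` with `1 < q − p < m − 1`. -/
theorem stmt12_topsonly_hybrid (D : Set (Pref A)) (hD : D.Nonempty)
    (hcard : 3 ≤ Fintype.card A) (huni : Unidimensional D)
    (hnd : ¬ DictatorialDomain D) (htod : TopsOnlyDomain D)
    (n : ℕ) (hn : 2 ≤ n) :
    (¬ ∃ f : (Fin n → Pref A) → A, IsRule D f ∧ StrategyProof D f ∧ Anonymous D f) ↔
    (∃ Pl ∈ D, ∃ Pu ∈ D, Reversed Pl Pu ∧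
      ∃ p q : ℕ, p < q ∧ q < Fintype.card A ∧ 1 < q - p ∧
        q - p < Fintype.card A - 1 ∧
        HybridDomainOn D (lineOf Pl) (rk Pl p) (rk Pl q)) := by
  constructor
  · intro hno
    obtain ⟨hG, ⟨Pl, hPl, Pu, hPu, hrev⟩, _⟩ := huni
    have rev := TOH.rev_pos hrev
    have first : ∀ P : Pref A, (∀ k, TOH.St D P k) ∨
        ∃ p, (∀ k < p, TOH.St D P k) ∧ ¬ TOH.St D P p := by
      intro P
      by_cases h : ∃ k, ¬ TOH.St D P k
      · refine Or.inr ⟨Nat.find h, fun k hk => ?_, Nat.find_spec h⟩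
        exact not_not.mp (Nat.find_min h hk)
      · push Not at h
        exact Or.inl h
    rcases first Pl with hl | ⟨p, L, hp⟩
    · exact absurd (TOH.leftmost (p := Fintype.card A) (q := 0) rev (fun k _ => hl k)
        (fun k hk => absurd hk (by omega)) (by omega) n hn) hno
    rcases first Pu with hu | ⟨q', R, hq⟩
    · exact absurd (TOH.leftmost (p := 0) (q := Fintype.card A) rev
        (fun k hk => absurd hk (by omega)) (fun k _ => hu k) (by omega) n hn) hno
    by_cases hpq : Fintype.card A < p + q' + 3
    · exact absurd (TOH.leftmost rev L R hpq n hn) hno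
    have c : TOH.Ctx D Pl Pu p q' := ⟨hcard, hG, hPl, hPu, rev, L, R, by omega⟩
    have hpos : 0 < p + q' := by
      by_contra h0
      apply hnd
      intro n' hn' f hr hs
      obtain ⟨i, hi⟩ := c.dictOn htod hp hq hn' f hr hs
      refine ⟨i, fun P hP _ => hi P hP fun j => ?_⟩
      exact ⟨by omega, by omega⟩
    have ea : TOH.pos Pl (rk Pl p) = p := TOH.pos_rk _ (by omega)
    have eb : TOH.pos Pl (rk Pl (Fintype.card A - 1 - q')) = Fintype.card A - 1 - q' :=
      TOH.pos_rk _ (by omega)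
    have rb := rev (rk Pl (Fintype.card A - 1 - q'))
    have hab : TOH.pos Pl (rk Pl p) < TOH.pos Pl (rk Pl (Fintype.card A - 1 - q')) := by omega
    refine ⟨Pl, hPl, Pu, hPu, hrev, p, Fintype.card A - 1 - q', by omega, by omega, by omega,
      by omega, TOH.line_tree, TOH.line_dual hab,
      TOH.hybrid_of rev L R ea (by omega) hab, hG, ?_, ?_⟩
    · rintro ⟨T', a', b', hT', hd', hD', hss⟩
      apply hss.2
      intro z hz
      apply TOH.zone_sub hT' (TOH.DT.of hd') hD' hPl hPu rev hp hq
      have hz' := (TOH.line_intv hab.le).mp hz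
      have rz := rev z
      exact ⟨by omega, by omega⟩
    · rw [TOH.line_ncard hab.le]
      omega
  · rintro ⟨Pl, hPl, Pu, hPu, hrev, p, q, hpq, hqm, h1, h2, hT, hdt, hDH, hG, hmin, h3⟩
      ⟨f, hr, hs, han⟩
    have rev := TOH.rev_pos hrev
    have ea : TOH.pos Pl (rk Pl p) = p := TOH.pos_rk _ (by omega)
    have eb : TOH.pos Pl (rk Pl q) = q := TOH.pos_rk _ hqm
    have ra := rev (rk Pl p)
    have rb := rev (rk Pl q)
    have hab : TOH.pos Pl (rk Pl p) < TOH.pos Pl (rk Pl q) := by omega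
    obtain ⟨L, R⟩ := TOH.of_hybrid hPl hPu rev hab hDH
    have hp : ¬ TOH.St D Pl (TOH.pos Pl (rk Pl p)) := by
      intro hst
      have ea' : TOH.pos Pl (rk Pl (p + 1)) = p + 1 := TOH.pos_rk _ (by omega)
      have hab' : TOH.pos Pl (rk Pl (p + 1)) < TOH.pos Pl (rk Pl q) := by omega
      have L' : ∀ k < p + 1, TOH.St D Pl k := by
        intro k hk
        by_cases hk' : k = TOH.pos Pl (rk Pl p)
        · rw [hk']; exact hst
        · exact L k (by omega)
      apply hmin
      refine ⟨lineOf Pl, rk Pl (p + 1), rk Pl q, hT, TOH.line_dual hab',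
        TOH.hybrid_of rev L' R ea' rfl hab', ?_, ?_⟩
      · intro z hz
        have hz' := (TOH.line_intv hab'.le).mp hz
        exact (TOH.line_intv hab.le).mpr ⟨by omega, by omega⟩
      · intro hsub
        have hz := hsub ((TOH.line_intv (z := rk Pl p) hab.le).mpr ⟨by omega, by omega⟩)
        have hz' := (TOH.line_intv hab'.le).mp hz
        omega
    have hq : ¬ TOH.St D Pu (TOH.pos Pu (rk Pl q)) := by
      intro hst
      have eb' : TOH.pos Pl (rk Pl (q - 1)) = q - 1 := TOH.pos_rk _ (by omega)
      have rb' := rev (rk Pl (q - 1))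
      have hab' : TOH.pos Pl (rk Pl p) < TOH.pos Pl (rk Pl (q - 1)) := by omega
      have R' : ∀ k < TOH.pos Pu (rk Pl q) + 1, TOH.St D Pu k := by
        intro k hk
        by_cases hk' : k = TOH.pos Pu (rk Pl q)
        · rw [hk']; exact hst
        · exact R k (by omega)
      apply hmin
      refine ⟨lineOf Pl, rk Pl p, rk Pl (q - 1), hT, TOH.line_dual hab',
        TOH.hybrid_of rev L R' rfl (by omega) hab', ?_, ?_⟩
      · intro z hz
        have hz' := (TOH.line_intv hab'.le).mp hz
        exact (TOH.line_intv hab.le).mpr ⟨by omega, by omega⟩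
      · intro hsub
        have hz := hsub ((TOH.line_intv (z := rk Pl q) hab.le).mpr ⟨by omega, by omega⟩)
        have hz' := (TOH.line_intv hab'.le).mp hz
        omega
    have c : TOH.Ctx D Pl Pu (TOH.pos Pl (rk Pl p)) (TOH.pos Pu (rk Pl q)) :=
      ⟨hcard, hG, hPl, hPu, rev, L, R, by omega⟩
    exact c.notAnon htod hp hq hn f hr hs han
end

section
/- Fix two voters N = {1, 2}, a path-connected domain D and a strategy-proof rule f : D^2 → A. Let π = (x_1, …, x_v) with v ≥ 3 be a path in the adjacency graph G_∼, and suppose D contains a preference with peak x_1 and second-ranked alternative x_v and a preference with peak x_v and second-ranked alternative x_1. Then f behaves like a dictatorship on {x_1, …, x_v}. -/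
open Classical

set_option linter.unusedSectionVars false
set_option linter.unusedVariables false

variable {A : Type*} [Fintype A] [DecidableEq A] [Nonempty A]

/-- Two-voter strategy-proof unanimous rule in curried form. -/
structure Good2 (D : Set (Pref A)) (g : Pref A → Pref A → A) : Prop where
  un : ∀ V ∈ D, ∀ T ∈ D, ∀ a, peak V = a → peak T = a → g V T = a
  sp1 : ∀ V ∈ D, ∀ T ∈ D, ∀ W ∈ D, g V T = g W T ∨ prefers V (g V T) (g W T)
  sp2 : ∀ V ∈ D, ∀ T ∈ D, ∀ W ∈ D, g V T = g V W ∨ prefers T (g V T) (g V W)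

theorem Good2.flip {D : Set (Pref A)} {g : Pref A → Pref A → A} (h : Good2 D g) :
    Good2 D (fun V T => g T V) :=
  ⟨fun V hV T hT a h1 h2 => h.un T hT V hV a h2 h1,
   fun V hV T hT W hW => h.sp2 T hT V hV W hW,
   fun V hV T hT W hW => h.sp1 T hT V hV W hW⟩

theorem not_prefers_peak (V : Pref A) (c : A) : ¬ prefers V c (peak V) := by
  intro h
  have h0 : 0 < Fintype.card A := Fintype.card_pos
  unfold prefers peak rk at h
  rw [dif_pos h0, Equiv.symm_apply_apply] at h
  exact absurd h (by simp)

theorem prefers_second (hc : 3 ≤ Fintype.card A) (V : Pref A) (c : A)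
    (h : prefers V c (second V)) : c = peak V := by
  have h0 : 0 < Fintype.card A := by omega
  have h1 : 1 < Fintype.card A := by omega
  unfold prefers second rk at h
  rw [dif_pos h1, Equiv.symm_apply_apply] at h
  have h2 : V.symm c = ⟨0, h0⟩ := by
    rw [Fin.lt_def] at h
    apply Fin.ext
    simp only at h ⊢
    omega
  unfold peak rk
  rw [dif_pos h0, ← h2, Equiv.apply_symm_apply]

theorem Good2.l1 {D : Set (Pref A)} {g : Pref A → Pref A → A} (h : Good2 D g)
    {V W T : Pref A} (hV : V ∈ D) (hW : W ∈ D) (hT : T ∈ D)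
    (hw : g W T = peak V) : g V T = peak V := by
  rcases h.sp1 V hV T hT W hW with h1 | h1
  · rw [h1, hw]
  · rw [hw] at h1
    exact absurd h1 (not_prefers_peak _ _)

theorem Good2.l2 {D : Set (Pref A)} {g : Pref A → Pref A → A} (h : Good2 D g)
    (hc : 3 ≤ Fintype.card A)
    {V W T : Pref A} (hV : V ∈ D) (hW : W ∈ D) (hT : T ∈ D)
    (hw : g W T = second V) : g V T = peak V ∨ g V T = second V := by
  rcases h.sp1 V hV T hT W hW with h1 | h1
  · right; rw [h1, hw]
  · left
    rw [hw] at h1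
    exact prefers_second hc _ _ h1

theorem swap_rank {R R' : Pref A} (hc : 3 ≤ Fintype.card A)
    (h : ∀ k : ℕ, 2 ≤ k → rk R k = rk R' k) {c : A} (h2 : 2 ≤ (R'.symm c).val) :
    R.symm c = R'.symm c := by
  have h3 := h _ h2
  unfold rk at h3
  rw [dif_pos (R'.symm c).isLt, dif_pos (R'.symm c).isLt] at h3
  rw [Fin.eta, Equiv.apply_symm_apply] at h3
  rw [Equiv.symm_apply_eq, h3]

theorem rank_ge_two {R : Pref A} (hc : 3 ≤ Fintype.card A) {c : A}
    (h1 : c ≠ peak R) (h2 : c ≠ second R) : 2 ≤ (R.symm c).val := by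
  by_contra hlt
  have h0' : 0 < Fintype.card A := by omega
  have h1' : 1 < Fintype.card A := by omega
  have : R.symm c = ⟨0, h0'⟩ ∨ R.symm c = ⟨1, h1'⟩ := by
    rcases Nat.lt_or_ge (R.symm c).val 1 with h | h
    · left; apply Fin.ext; simp only; omega
    · right; apply Fin.ext; simp only; omega
  rcases this with h | h
  · apply h1; unfold peak rk; rw [dif_pos h0', ← h, Equiv.apply_symm_apply]
  · apply h2; unfold second rk; rw [dif_pos h1', ← h, Equiv.apply_symm_apply]

theorem Good2.l3 {D : Set (Pref A)} {g : Pref A → Pref A → A} (h : Good2 D g)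
    (hc : 3 ≤ Fintype.card A)
    {V R R' : Pref A} (hV : V ∈ D) (hR : R ∈ D) (hR' : R' ∈ D)
    (hk : ∀ k : ℕ, 2 ≤ k → rk R k = rk R' k)
    (h1 : g V R' ≠ peak R') (h2 : g V R' ≠ second R') : g V R = g V R' := by
  have hr := rank_ge_two hc h1 h2
  rcases h.sp2 V hV R hR R' hR' with e | e
  · exact e
  rcases h.sp2 V hV R' hR' R hR with e' | e'
  · exact e'.symm
  exfalso
  unfold prefers at e e'
  have e'' := e'
  rw [Fin.lt_def] at e''
  rw [swap_rank hc hk hr, swap_rank hc hk (c := g V R) (by omega)] at e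
  exact absurd e (not_lt.mpr e'.le)

theorem key_cycle {D : Set (Pref A)} {g : Pref A → Pref A → A} (h : Good2 D g)
    (hc : 3 ≤ Fintype.card A) (v : ℕ) (hv : 3 ≤ v) (y : ℕ → A)
    (hinj : ∀ i j, i < j → j ≤ v → y i = y j → i = 0 ∧ j = v)
    (hadj : ∀ i, 1 ≤ i → i < v → DomAdjacent D (y i) (y (i+1)))
    (P Q : Pref A) (hP : P ∈ D) (hQ : Q ∈ D)
    (hP1 : peak P = y 0) (hP2 : second P = y 1) (hQ1 : peak Q = y 1) (hQ2 : second Q = y 0)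
    (h0 : g P Q = y 0) :
    ∀ i, i ≤ v → ∀ T ∈ D, peak T = y i → ∀ j, j ≤ i → ∀ V ∈ D, peak V = y j → g V T = y j := by
  have hsec : ∀ i, i < v → (∃ V ∈ D, peak V = y i ∧ second V = y (i+1)) ∧
      (∃ V ∈ D, peak V = y (i+1) ∧ second V = y i) := by
    intro i hi
    rcases Nat.eq_zero_or_pos i with rfl | hpos
    · exact ⟨⟨P, hP, hP1, hP2⟩, ⟨Q, hQ, hQ1, hQ2⟩⟩
    · obtain ⟨R, hR, R', hR', a, b, c, d, _⟩ := hadj i hpos hi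
      exact ⟨⟨R, hR, a, b⟩, ⟨R', hR', c, d⟩⟩
  have lift : ∀ {V W T : Pref A} {a : A}, V ∈ D → W ∈ D → T ∈ D → peak V = a →
      g W T = a → g V T = a := by
    intro V W T a hV hW hT e1 e2
    rw [← e1]; exact h.l1 hV hW hT (by rw [e2, e1])
  have lift2 : ∀ {V W T : Pref A} {a : A}, V ∈ D → W ∈ D → T ∈ D → peak T = a →
      g V W = a → g V T = a := by
    intro V W T a hV hW hT e1 e2
    rw [← e1]; exact h.flip.l1 hT hW hV (by rw [e2, e1])
  have pick : ∀ {V W T : Pref A} {a b : A}, V ∈ D → W ∈ D → T ∈ D → peak V = a →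
      second V = b → g W T = b → g V T = a ∨ g V T = b := by
    intro V W T a b hV hW hT e1 e2 e3
    rw [← e1, ← e2]; exact h.l2 hc hV hW hT (by rw [e3, e2])
  have pick2 : ∀ {V W T : Pref A} {a b : A}, V ∈ D → W ∈ D → T ∈ D → peak T = a →
      second T = b → g V W = b → g V T = a ∨ g V T = b := by
    intro V W T a b hV hW hT e1 e2 e3
    rw [← e1, ← e2]; exact h.flip.l2 hc hT hW hV (by rw [e3, e2])
  intro i
  induction i using Nat.strong_induction_on with
  | _ i ih =>
  intro hi T hT hTp
  rcases Nat.eq_zero_or_pos i with rfl | hpos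
  · intro j hj V hV hVp
    obtain rfl : j = 0 := by omega
    exact h.un V hV T hT _ hVp hTp
  rcases Nat.lt_or_ge i 2 with hi2 | hi2
  · obtain rfl : i = 1 := by omega
    intro j hj V hV hVp
    rcases Nat.lt_or_ge j 1 with hj1 | hj1
    · obtain rfl : j = 0 := by omega
      have hPT : g P T = y 0 := by
        rcases pick hP hT hT hP1 hP2 (h.un T hT T hT _ hTp hTp) with e | e
        · exact e
        · have := lift2 hP hT hQ hQ1 e
          rw [h0] at this
          have := hinj 0 1 (by omega) (by omega) this
          omega
      exact lift hV hP hT hVp hPT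
    · obtain rfl : j = 1 := by omega
      exact h.un V hV T hT _ hVp hTp
  obtain ⟨n, rfl⟩ : ∃ n, i = n + 2 := ⟨i - 2, by omega⟩
  have ne1 : y (n+1) ≠ y (n+2) := fun e => by
    have := hinj _ _ (by omega) (by omega) e; omega
  have ne2 : y n ≠ y (n+1) := fun e => by
    have := hinj _ _ (by omega) (by omega) e; omega
  have ne3 : y n ≠ y (n+2) := fun e => by
    have := hinj _ _ (by omega) (by omega) e; omega
  obtain ⟨R', hR', R, hR, a1, a2, b1, b2, hk⟩ := hadj (n+1) (by omega) (by omega)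
  obtain ⟨⟨Z, hZ, hZ1, hZ2⟩, ⟨U, hU, hU1, hU2⟩⟩ := hsec n (by omega)
  have hZR' : g Z R' = y n :=
    ih (n+1) (by omega) (by omega) R' hR' a1 n (by omega) Z hZ hZ1
  have hZR : g Z R = y n := by
    rw [h.l3 hc hZ hR hR' (fun k hk' => (hk k hk').symm) (by rw [hZR', a1]; exact ne2)
      (by rw [hZR', a2]; exact ne3), hZR']
  have hUR : g U R = y (n+1) := by
    rcases pick hU hZ hR hU1 hU2 hZR with e | e
    · exact e
    · rcases pick2 hU hU hR b1 b2 (h.un U hU U hU _ hU1 hU1) with e' | e'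
      · rw [e] at e'; exact absurd e' ne3
      · exact e'
  have hR'R : g R' R = y (n+1) := lift hR' hU hR a1 hUR
  have hR'T : g R' T = y (n+1) := by
    rcases pick hR' hT hT a1 a2 (h.un T hT T hT _ hTp hTp) with e | e
    · exact e
    · have := lift2 hR' hT hR b1 e
      rw [hR'R] at this
      exact absurd this ne1
  have down : ∀ d, d ≤ n + 1 → ∃ V ∈ D, g V T = y (n + 1 - d) := by
    intro d
    induction d with
    | zero => intro _; exact ⟨R', hR', hR'T⟩
    | succ d ihd =>
      intro hd
      obtain ⟨W, hW, hWT⟩ := ihd (by omega)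
      obtain ⟨j, hj⟩ : ∃ j, n + 1 - (d+1) = j := ⟨_, rfl⟩
      have hj' : n + 1 - d = j + 1 := by omega
      rw [hj'] at hWT
      rw [hj]
      obtain ⟨⟨V, hV, hV1, hV2⟩, ⟨B, hB, hB1, hB2⟩⟩ := hsec j (by omega)
      refine ⟨V, hV, ?_⟩
      rcases pick hV hW hT hV1 hV2 hWT with e | e
      · exact e
      · have e1 := lift2 hV hT hB hB1 e
        have e2 := ih (j+1) (by omega) (by omega) B hB hB1 j (by omega) V hV hV1
        rw [e2] at e1
        have := hinj _ _ (by omega) (by omega) e1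
        omega
  intro j hj V hV hVp
  rcases Nat.lt_or_ge j (n+2) with hj1 | hj1
  · obtain ⟨W, hW, hWT⟩ := down (n + 1 - j) (by omega)
    have : n + 1 - (n + 1 - j) = j := by omega
    rw [this] at hWT
    exact lift hV hW hT hVp hWT
  · obtain rfl : j = n + 2 := by omega
    exact h.un V hV T hT _ hVp hTp

theorem DomAdjacent.symm' {D : Set (Pref A)} {a b : A} (h : DomAdjacent D a b) :
    DomAdjacent D b a := by
  obtain ⟨R, hR, R', hR', h1, h2, h3, h4, h5⟩ := h
  exact ⟨R', hR', R, hR, h3, h4, h1, h2, fun k hk => (h5 k hk).symm⟩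

theorem mod_aux {v a b : ℕ} (hab : a < b) (hb : b ≤ a + v) (h : a % v = b % v) : b = a + v := by
  have h1 : v ∣ b - a := (Nat.modEq_iff_dvd' hab.le).mp h
  have := Nat.le_of_dvd (by omega) h1
  omega

/-- The two directions along the closed-up path. -/
theorem both_parts {D : Set (Pref A)} {g : Pref A → Pref A → A} (h : Good2 D g)
    (hc : 3 ≤ Fintype.card A) (v : ℕ) (hv : 3 ≤ v) (X : ℕ → A)
    (hX : ∀ m n, X m = X n → m % v = n % v) (hXv : ∀ m, X (v + m) = X m)
    (hadj : ∀ k, k + 1 < v → DomAdjacent D (X k) (X (k+1)))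
    (P Q : Pref A) (hP : P ∈ D) (hQ : Q ∈ D)
    (hP1 : peak P = X 0) (hP2 : second P = X (v-1))
    (hQ1 : peak Q = X (v-1)) (hQ2 : second Q = X 0) :
    (g P Q = X 0 → ∀ j k, k ≤ j → j < v → ∀ T ∈ D, peak T = X k → ∀ V ∈ D, peak V = X j →
      g V T = X j) ∧
    (g Q P = X (v-1) → ∀ j k, j ≤ k → k < v → ∀ T ∈ D, peak T = X k → ∀ V ∈ D, peak V = X j →
      g V T = X j) := by
  have hX0 : X v = X 0 := hXv 0
  constructor
  · intro h0 j k hkj hj T hT hTp V hV hVp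
    have key := key_cycle h hc v hv (fun i => X (v - i)) ?_ ?_ P Q hP hQ
      (by simp only [Nat.sub_zero]; rw [hX0, hP1]) hP2 hQ1
      (by simp only [Nat.sub_zero]; rw [hX0, hQ2])
      (by simp only [Nat.sub_zero]; rw [hX0, h0])
      (v - k) (by omega) T hT (by rw [hTp]; congr 1; omega)
      (v - j) (by omega) V hV (by rw [hVp]; congr 1; omega)
    ·
      rw [key]; congr 1; omega
    · intro a b hab hb e
      have := mod_aux (v := v) (a := v - b) (b := v - a) (by omega) (by omega) (hX _ _ e).symm
      omega
    · intro i hi hiv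
      have := hadj (v - (i+1)) (by omega)
      have e : v - (i+1) + 1 = v - i := by omega
      rw [e] at this
      exact this.symm'
  · intro h0 j k hjk hk T hT hTp V hV hVp
    have hsh : ∀ i, X (v - 1 + (i + 1)) = X i := by
      intro i
      rw [← hXv i]; congr 1; omega
    have key := key_cycle h hc v hv (fun i => X (v - 1 + i)) ?_ ?_ Q P hQ hP
      hQ1 (by rw [hQ2]; exact (hsh 0).symm) (by rw [hP1]; exact (hsh 0).symm) hP2 h0
      (k+1) (by omega) T hT (by rw [hTp, hsh])
      (j+1) (by omega) V hV (by rw [hVp, hsh])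
    ·
      rw [key, hsh]
    · intro a b hab hb e
      have := mod_aux (v := v) (a := v - 1 + a) (b := v - 1 + b) (by omega) (by omega) (hX _ _ e)
      omega
    · intro i hi hiv
      obtain ⟨i, rfl⟩ : ∃ i', i = i' + 1 := ⟨i - 1, by omega⟩
      rw [hsh, hsh]
      exact hadj i hiv

/-- Lemma 3: a path whose two endpoints can each be the top of a
preference with the other endpoint second-ranked forces a dictatorship on the
path. -/
theorem stmt15_dictatorship_on_path (D : Set (Pref A)) (hD : D.Nonempty)
    (hcard : 3 ≤ Fintype.card A) (hpc : PathConnectedDom D)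
    (f : (Fin 2 → Pref A) → A) (hrule : IsRule D f) (hsp : StrategyProof D f)
    (v : ℕ) (hv : 3 ≤ v) (x : Fin v → A) (hpath : IsPathIn (adjGraph D) x)
    (P Q : Pref A) (hP : P ∈ D) (hQ : Q ∈ D)
    (hP1 : peak P = x ⟨0, by omega⟩) (hP2 : second P = x ⟨v - 1, by omega⟩)
    (hQ1 : peak Q = x ⟨v - 1, by omega⟩) (hQ2 : second Q = x ⟨0, by omega⟩) :
    DictatorOn D f (Set.range x) := by
  classical
  have hv0 : 0 < v := by omega
  let g : Pref A → Pref A → A := fun V T => f ![V, T]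
  have hdom : ∀ V ∈ D, ∀ T ∈ D, InDom D ![V, T] := by
    intro V hV T hT i
    fin_cases i
    · exact hV
    · exact hT
  have hg : Good2 D g := by
    refine ⟨?_, ?_, ?_⟩
    · intro V hV T hT a h1 h2
      refine hrule _ (hdom V hV T hT) a ?_
      intro i
      fin_cases i
      · exact h1
      · exact h2
    · intro V hV T hT W hW
      have := hsp _ (hdom V hV T hT) 0 W hW
      have e : Function.update ![V, T] 0 W = ![W, T] := by
        ext i : 1; fin_cases i <;> simp
      rw [e] at this
      exact this
    · intro V hV T hT W hW
      have := hsp _ (hdom V hV T hT) 1 W hW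
      have e : Function.update ![V, T] 1 W = ![V, W] := by
        ext i : 1; fin_cases i <;> simp
      rw [e] at this
      exact this
  let X : ℕ → A := fun n => x ⟨n % v, Nat.mod_lt _ hv0⟩
  have hXx : ∀ n (hn : n < v), X n = x ⟨n, hn⟩ := by
    intro n hn
    simp only [X, Nat.mod_eq_of_lt hn]
  have hX : ∀ m n, X m = X n → m % v = n % v := by
    intro m n e
    have := hpath.1 e
    simpa using this
  have hXv : ∀ m, X (v + m) = X m := by
    intro m
    simp only [X, Nat.add_mod_left]
  have hadj : ∀ k, k + 1 < v → DomAdjacent D (X k) (X (k+1)) := by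
    intro k hk
    have := hpath.2 k hk
    rw [hXx k (by omega), hXx (k+1) hk]
    rw [adjGraph, SimpleGraph.fromRel_adj] at this
    rcases this.2 with h | h
    · exact h
    · exact h.symm'
  rw [← hXx 0 (by omega)] at hP1 hQ2
  rw [← hXx (v-1) (by omega)] at hP2 hQ1
  have full : ∀ g' : Pref A → Pref A → A, Good2 D g' → (g' P Q = X 0 ∨ g' Q P = X (v-1)) →
      ∀ V ∈ D, ∀ T ∈ D, peak V ∈ Set.range x → peak T ∈ Set.range x → g' V T = peak V := by
    intro g' hg' hor V hV T hT ⟨⟨j, hj⟩, hVj⟩ ⟨⟨k, hk⟩, hTk⟩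
    obtain ⟨p1, p2⟩ := both_parts hg' hcard v hv X hX hXv hadj P Q hP hQ hP1 hP2 hQ1 hQ2
    have hand : g' P Q = X 0 ∧ g' Q P = X (v-1) := by
      rcases hor with h | h
      · exact ⟨h, p1 h (v-1) 0 (by omega) (by omega) P hP hP1 Q hQ hQ1⟩
      · exact ⟨p2 h 0 (v-1) (by omega) (by omega) Q hQ hQ1 P hP hP1, h⟩
    rw [← hXx] at hVj hTk
    rw [← hVj]
    rcases le_total k j with hkj | hkj
    · exact p1 hand.1 j k hkj hj T hT hTk.symm V hV hVj.symm
    · exact p2 hand.2 j k hkj hk T hT hTk.symm V hV hVj.symm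
  have heta : ∀ S : Fin 2 → Pref A, S = ![S 0, S 1] := by
    intro S
    ext i : 1; fin_cases i <;> rfl
  have hQQ : g Q Q = second P := hg.un Q hQ Q hQ _ (by rw [hQ1, hP2]) (by rw [hQ1, hP2])
  rcases hg.l2 hcard hP hQ hQ hQQ with e | e
  · refine ⟨0, fun S hS hpk => ?_⟩
    have := full g hg (Or.inl (by rw [e, hP1])) (S 0) (hS 0) (S 1) (hS 1) (hpk 0) (hpk 1)
    rw [heta S]
    exact this
  · refine ⟨1, fun S hS hpk => ?_⟩
    have := full _ hg.flip (Or.inr (by rw [e, hP2])) (S 1) (hS 1) (S 0) (hS 0)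
      (hpk 1) (hpk 0)
    rw [heta S]
    exact this
end
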